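/- Let k be a positive integer. As h → 0 with ε = ε(h) → 0 and, for some fixed δ̄ ∈ (0,1/2), ε(h) ≥ h^{1/2−δ̄} eventually, one has E( X_h^{2k}·1_{|X_h| ≤ ε} ) = (2k−1)!!·σ^{2k}·h^k + ((C₊+C₋)/(2k−Y))·h·ε^{2k−Y} + O(h²·ε^{2k−Y−2}) + O(h·ε^{2k−Y/2}) + O(h^{1/2}·ε^{2k−1}·e^{−ε²/(2σ²h)}) (the remainder being a sum of functions, each big-O of the indicated rate). Here (2k−1)!! denotes the double factorial. -/

import Mathlib

open MeasureTheory ProbabilityTheory Filter Asymptotics Set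
open scoped Topology NNReal ENNReal Real

noncomputable section

/-- The Lévy density `s(x) = (C₊·1_{x>0} + C₋·1_{x<0})·q(x)·|x|^{−1−Y}`. -/
def levyDensity (Y Cp Cm : ℝ) (q : ℝ → ℝ) (x : ℝ) : ℝ :=
  (if 0 < x then Cp else if x < 0 then Cm else 0) * q x * |x| ^ (-1 - Y)

/-- The Lévy measure `ν(dx) = s(x) dx`. -/
def levyMeasure (Y Cp Cm : ℝ) (q : ℝ → ℝ) : Measure ℝ :=
  volume.withDensity fun x => ENNReal.ofReal (levyDensity Y Cp Cm q x)

/-- The Lévy exponent `ψ_J(u) = ibu + ∫ (e^{iux} − 1 − iux·1_{|x|≤1}) ν(dx)`. -/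
def psiJ (b Y Cp Cm : ℝ) (q : ℝ → ℝ) (u : ℝ) : ℂ :=
  Complex.I * b * u +
    ∫ x : ℝ,
      (Complex.exp (Complex.I * u * x) - 1 - (if |x| ≤ 1 then Complex.I * u * x else 0))
      ∂(levyMeasure Y Cp Cm q)

/-- The scale parameter `ς = ((C₊+C₋)Γ(−Y)|cos(πY/2)|)^{1/Y}`. -/
def varsigma (Y Cp Cm : ℝ) : ℝ :=
  ((Cp + Cm) * Real.Gamma (-Y) * |Real.cos (π * Y / 2)|) ^ (1 / Y)

/-- The stable part of the Lévy exponent: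
`ς^Y |u|^Y (1 − iβ·sgn(u)·tan(πY/2))` with `β = (C₊−C₋)/(C₊+C₋)`. -/
def stablePart (Y Cp Cm : ℝ) (u : ℝ) : ℂ :=
  (varsigma Y Cp Cm ^ Y * |u| ^ Y : ℝ) *
    (1 - Complex.I * ((Cp - Cm) / (Cp + Cm)) * Real.sign u * Real.tan (π * Y / 2))

/-- Characteristic function of `X̃_h`, the time-`h` marginal of a Brownian motion with
variance `σ²` plus an independent strictly `Y`-stable process. -/
def tildeCF (σ Y Cp Cm : ℝ) (h u : ℝ) : ℂ :=
  Complex.exp (-(σ ^ 2 * u ^ 2 * h / 2) - h * stablePart Y Cp Cm u)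

/-!
Rescaling space by `ε` reduces the claim to the truncation level `1`: the law of `X_h / ε` has
Gaussian variance `σ²h/ε²` and Lévy measure `λ · levyMeasure Y C₊ C₋ (q (ε ·))` with
`λ = h ε^(-Y)`, both small. For a smooth compactly supported test function, Fourier inversion and
the second-order expansion of the exponential give the expectation as a Gaussian one plus `λ` times
the Lévy integral, up to `λ (λ + σ²h/ε²)`. The truncated power `x ^ (2k) 1_{|x| ≤ 1}` is split into
a smooth part and a part carried by the annuli around `±1`. There the jumps away from `0` are
separated off as a compound Poisson law; their first jump has a bounded density, which smooths the
sharp cut-off, so the small jumps and the Gaussian part enter only through their second moments.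
By the first-order expansion of `q` at `0`, replacing `q (ε ·)` by `1` in the Lévy integral costs
`λ ε`. The Gaussian truncation error is smaller than every power of `σ²h/ε²`, hence `O(h²)` up to
the factor `ε ^ (2k)`, and is absorbed in the other two rates.
-/

/-! ### Lévy exponents -/

theorem norm_cexp_sub_one_le_of_re_nonpos {z : ℂ} (hz : z.re ≤ 0) :
    ‖Complex.exp z - 1‖ ≤ ‖z‖ := by
  have hconv : Convex ℝ {w : ℂ | w.re ≤ 0} := convex_halfSpace_re_le 0
  have := hconv.norm_image_sub_le_of_norm_hasDerivWithin_le (𝕜 := ℂ) (f := Complex.exp)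
    (f' := Complex.exp) (C := 1) (x := 0) (y := z)
    (fun w _ => (Complex.hasDerivAt_exp w).hasDerivWithinAt)
    (fun w hw => by rw [Complex.norm_exp]; exact Real.exp_le_one_iff.mpr hw) (by simp) hz
  simpa using this

theorem norm_cexp_sub_one_sub_id_le_of_re_nonpos {z : ℂ} (hz : z.re ≤ 0) :
    ‖Complex.exp z - 1 - z‖ ≤ ‖z‖ ^ 2 := by
  have hconv : Convex ℝ ({w : ℂ | w.re ≤ 0} ∩ Metric.closedBall 0 ‖z‖) :=
    (convex_halfSpace_re_le 0).inter (convex_closedBall _ _)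
  have := hconv.norm_image_sub_le_of_norm_hasDerivWithin_le (𝕜 := ℂ)
    (f := fun w => Complex.exp w - w) (f' := fun w => Complex.exp w - 1) (C := ‖z‖)
    (x := 0) (y := z)
    (fun w _ => ((Complex.hasDerivAt_exp w).sub (hasDerivAt_id w)).hasDerivWithinAt)
    (fun w hw => (norm_cexp_sub_one_le_of_re_nonpos hw.1).trans (by simpa using hw.2)) (by simp)
    ⟨hz, by simp⟩
  simpa [pow_two, sub_right_comm] using this

theorem norm_cexp_I_mul (u x : ℝ) : ‖Complex.exp (Complex.I * u * x)‖ = 1 := by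
  rw [mul_assoc, ← Complex.ofReal_mul, Complex.norm_exp_I_mul_ofReal]

/-- The integrand `e^{iux} - 1 - iux` of the Lévy exponent of a jump measure whose jumps are all
compensated, which is possible as soon as the large jumps have a finite first moment. -/
def levyKernel (u x : ℝ) : ℂ := Complex.exp (Complex.I * u * x) - 1 - Complex.I * u * x

/-- The weight `x² ∧ |x|`, against which a Lévy measure must be finite for all of its jumps to be
compensated. -/
def sqMinAbs (x : ℝ) : ℝ := min (x ^ 2) |x|

theorem sqMinAbs_nonneg (x : ℝ) : 0 ≤ sqMinAbs x := le_min (sq_nonneg x) (abs_nonneg x)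

theorem continuous_sqMinAbs : Continuous sqMinAbs := by unfold sqMinAbs; fun_prop

theorem levyKernel_zero_right (u : ℝ) : levyKernel u 0 = 0 := by simp [levyKernel]

theorem continuous_uncurry_levyKernel : Continuous (Function.uncurry levyKernel) := by
  simp only [Function.uncurry_def, levyKernel]; fun_prop

theorem continuous_levyKernel (u : ℝ) : Continuous (levyKernel u) :=
  continuous_uncurry_levyKernel.comp (Continuous.prodMk_right u)

theorem norm_levyKernel_le (u x : ℝ) : ‖levyKernel u x‖ ≤ 2 * (1 + u ^ 2) * sqMinAbs x := by
  have hre : (Complex.I * u * x).re ≤ 0 := by simp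
  have hnorm : ‖Complex.I * u * x‖ = |u| * |x| := by simp
  have hsq := norm_cexp_sub_one_sub_id_le_of_re_nonpos hre
  have hlin := (norm_sub_le _ _).trans
    (add_le_add_left (norm_cexp_sub_one_le_of_re_nonpos hre) ‖Complex.I * u * x‖)
  rw [hnorm, mul_pow, sq_abs, sq_abs] at hsq
  rw [hnorm] at hlin
  have hu : 2 * |u| ≤ 2 * (1 + u ^ 2) := by nlinarith [sq_nonneg (|u| - 1), sq_abs u]
  rw [sqMinAbs, mul_min_of_nonneg _ _ (by positivity)]
  refine le_min (hsq.trans ?_) (hlin.trans ?_)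
  · nlinarith [mul_nonneg (sq_nonneg u) (sq_nonneg x), sq_nonneg x]
  · nlinarith [mul_le_mul_of_nonneg_right hu (abs_nonneg x)]

/-- The Lévy exponent `iβu + ∫ (e^{iux} - 1 - iux) ν(dx)` of a pure jump law with mean `β` and
jump measure `ν`. -/
def jumpExponent (β : ℝ) (ν : Measure ℝ) (u : ℝ) : ℂ :=
  Complex.I * β * u + ∫ x, levyKernel u x ∂ν

/-- The size `|β| + ∫ x² ∧ |x| ν(dx)` of the exponent `jumpExponent β ν` at bounded frequencies. -/
def jumpActivity (β : ℝ) (ν : Measure ℝ) : ℝ := |β| + ∫ x, sqMinAbs x ∂ν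

/-- `μ` is infinitely divisible with mean `β`, Gaussian variance `s` and Lévy measure `ν`, the
latter integrating `x² ∧ |x|`. -/
structure HasLevyTriplet (μ : Measure ℝ) (β : ℝ) (s : ℝ≥0) (ν : Measure ℝ) : Prop where
  integrable_sqMinAbs : Integrable sqMinAbs ν
  charFun_eq : ∀ u, charFun μ u = Complex.exp (-(s * u ^ 2 / 2 : ℝ) + jumpExponent β ν u)

theorem jumpActivity_nonneg (β : ℝ) (ν : Measure ℝ) : 0 ≤ jumpActivity β ν :=
  add_nonneg (abs_nonneg β) (integral_nonneg sqMinAbs_nonneg)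

section JumpExponent

variable {ν : Measure ℝ}

theorem integrable_levyKernel (hν : Integrable sqMinAbs ν) (u : ℝ) :
    Integrable (levyKernel u) ν :=
  (hν.const_mul _).mono' (continuous_levyKernel u).aestronglyMeasurable
    (Eventually.of_forall (norm_levyKernel_le u))

theorem jumpExponent_re_nonpos (β : ℝ) (hν : Integrable sqMinAbs ν) (u : ℝ) :
    (jumpExponent β ν u).re ≤ 0 := by
  have hdrift : (Complex.I * β * u).re = 0 := by simp
  have hcos : ∀ x, (levyKernel u x).re = Real.cos (u * x) - 1 := fun x => by
    simp [levyKernel, Complex.exp_re]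
  rw [jumpExponent, Complex.add_re, hdrift, zero_add, ← RCLike.re_eq_complex_re,
    ← integral_re (integrable_levyKernel hν u)]
  refine integral_nonpos fun x => ?_
  simp only [RCLike.re_eq_complex_re, hcos, Pi.zero_apply]
  linarith [Real.cos_le_one (u * x)]

theorem norm_jumpExponent_le (β : ℝ) (hν : Integrable sqMinAbs ν) (u : ℝ) :
    ‖jumpExponent β ν u‖ ≤ 2 * jumpActivity β ν * (1 + u ^ 2) := by
  have hdrift : ‖Complex.I * β * u‖ ≤ 2 * |β| * (1 + u ^ 2) := by
    have : |u| ≤ 2 * (1 + u ^ 2) := by nlinarith [sq_nonneg (|u| - 1), sq_abs u]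
    simp only [norm_mul, Complex.norm_I, one_mul, Complex.norm_real, Real.norm_eq_abs]
    nlinarith [mul_le_mul_of_nonneg_left this (abs_nonneg β)]
  have hjump : ‖∫ x, levyKernel u x ∂ν‖ ≤ 2 * (1 + u ^ 2) * ∫ x, sqMinAbs x ∂ν := by
    rw [← integral_const_mul]
    exact norm_integral_le_of_norm_le (hν.const_mul _)
      (Eventually.of_forall (norm_levyKernel_le u))
  calc ‖jumpExponent β ν u‖ ≤ _ := norm_add_le _ _
    _ ≤ _ := add_le_add hdrift hjump
    _ = _ := by rw [jumpActivity]; ring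

theorem continuous_jumpExponent (β : ℝ) (hν : Integrable sqMinAbs ν) :
    Continuous (jumpExponent β ν) := by
  refine Continuous.add (by fun_prop) (continuous_iff_continuousAt.2 fun u => ?_)
  refine continuousAt_of_dominated (bound := fun x => 2 * (1 + (|u| + 1) ^ 2) * sqMinAbs x)
    (Eventually.of_forall fun v => (continuous_levyKernel v).aestronglyMeasurable) ?_
    (hν.const_mul _) (Eventually.of_forall fun x =>
      (continuous_uncurry_levyKernel.comp (Continuous.prodMk_left x)).continuousAt)
  filter_upwards [Metric.ball_mem_nhds u one_pos] with v hv
  refine Eventually.of_forall fun x => (norm_levyKernel_le v x).trans ?_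
  have hvu : |v| ≤ |u| + 1 := by
    have := abs_sub_abs_le_abs_sub v u
    rw [Metric.mem_ball, Real.dist_eq] at hv
    linarith
  have hsq : v ^ 2 ≤ (|u| + 1) ^ 2 := by rw [← sq_abs v]; gcongr
  have := sqMinAbs_nonneg x
  gcongr

theorem jumpExponent_add_measure (β β' : ℝ) {ν' : Measure ℝ} (hν : Integrable sqMinAbs ν)
    (hν' : Integrable sqMinAbs ν') (u : ℝ) :
    jumpExponent (β + β') (ν + ν') u = jumpExponent β ν u + jumpExponent β' ν' u := by
  simp only [jumpExponent]
  rw [integral_add_measure (integrable_levyKernel hν u) (integrable_levyKernel hν' u)]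
  push_cast
  ring

theorem jumpExponent_smul (β : ℝ) (ν : Measure ℝ) {c : ℝ} (hc : 0 ≤ c) (u : ℝ) :
    jumpExponent (c * β) (ENNReal.ofReal c • ν) u = c * jumpExponent β ν u := by
  simp only [jumpExponent]
  rw [integral_smul_measure, ENNReal.toReal_ofReal hc, Complex.real_smul]
  push_cast
  ring

theorem jumpExponent_map_mul (β c : ℝ) (ν : Measure ℝ) (u : ℝ) :
    jumpExponent (c * β) (ν.map (c * ·)) u = jumpExponent β ν (c * u) := by
  simp only [jumpExponent]
  rw [integral_map (by fun_prop) (continuous_levyKernel u).aestronglyMeasurable]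
  have : ∀ x, levyKernel u (c * x) = levyKernel (c * u) x := fun x => by
    simp only [levyKernel]; push_cast; ring_nf
  simp only [this]
  push_cast
  ring

end JumpExponent

/-! ### Smooth test functions -/

/-- `F` is the inverse Fourier transform of a continuous `G` with four finite moments. The
frequency is normalised so that `∫ F dμ` pairs `G` with the characteristic function of `μ`. -/
structure HasFourierDensity (F : ℝ → ℝ) (G : ℝ → ℂ) : Prop where
  continuous : Continuous G
  integrable_weight : Integrable fun v : ℝ => (1 + v ^ 2) ^ 2 * ‖G v‖
  eq_integral : ∀ x : ℝ, (F x : ℂ) = ∫ v : ℝ, G v * Complex.exp (Complex.I * v * x)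

theorem integrable_weight_schwartzMap (f : SchwartzMap ℝ ℂ) (c : ℝ) :
    Integrable fun w : ℝ => (1 + (c * w) ^ 2) ^ 2 * ‖f w‖ := by
  have hsum := ((f.integrable_pow_mul volume 0).add
    ((f.integrable_pow_mul volume 2).const_mul (2 * c ^ 2))).add
    ((f.integrable_pow_mul volume 4).const_mul (c ^ 4))
  refine hsum.congr (Eventually.of_forall fun w => ?_)
  simp only [Pi.add_apply, Real.norm_eq_abs, pow_zero, sq_abs, Even.pow_abs (by decide : Even 4)]
  ring

theorem exists_hasFourierDensity {F : ℝ → ℝ} (hF : ContDiff ℝ (⊤ : ℕ∞) F)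
    (hc : HasCompactSupport F) : ∃ G, HasFourierDensity F G := by
  have hcc : HasCompactSupport fun x => (F x : ℂ) :=
    hc.comp_left (g := fun x : ℝ => (x : ℂ)) (by simp)
  let S : SchwartzMap ℝ ℂ := hcc.toSchwartzMap (Complex.ofRealCLM.contDiff.comp hF)
  let T : SchwartzMap ℝ ℂ := FourierTransform.fourier S
  have hinv (x : ℝ) :
      (F x : ℂ) = ∫ v : ℝ, Complex.exp (2 * π * (v * x : ℝ) * Complex.I) * T v := by
    have hS : (F x : ℂ) = FourierTransformInv.fourierInv T x := by
      rw [FourierTransform.fourierInv_fourier_eq S]; rfl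
    rw [hS, SchwartzMap.fourierInv_coe, Real.fourierInv_eq']
    congr 1 with v
    simp only [RCLike.inner_apply, conj_trivial, smul_eq_mul]
    congr 2
    push_cast; ring
  have hpi : (0 : ℝ) < 2 * π := by positivity
  refine ⟨fun u => (2 * π)⁻¹ * T (u / (2 * π)), ?_, ?_, fun x => ?_⟩
  · exact continuous_const.mul (T.continuous.comp (by fun_prop))
  · have := ((integrable_weight_schwartzMap T (2 * π)).const_mul (2 * π)⁻¹).comp_div hpi.ne'
    refine this.congr (Eventually.of_forall fun w => ?_)
    simp only [norm_mul, norm_inv, Complex.norm_real, Real.norm_eq_abs, abs_of_pos Real.pi_pos,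
      mul_div_cancel₀ w hpi.ne', RCLike.norm_ofNat]
    ring
  · have hscale := Measure.integral_comp_div
      (fun v : ℝ => Complex.exp (2 * π * (v * x : ℝ) * Complex.I) * T v) (2 * π)
    rw [← hinv, abs_of_pos hpi, Complex.real_smul] at hscale
    rw [← mul_right_inj' (Complex.ofReal_ne_zero.2 hpi.ne'), ← hscale, ← integral_const_mul]
    congr 1 with v
    have hexp : 2 * π * ((v / (2 * π) * x : ℝ) : ℂ) * Complex.I = Complex.I * v * x := by
      push_cast; field_simp
    rw [hexp]
    push_cast; field_simp

namespace HasFourierDensity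

variable {F : ℝ → ℝ} {G : ℝ → ℂ}

theorem integrable_mul (h : HasFourierDensity F G) {w : ℝ → ℂ} (hw : AEStronglyMeasurable w)
    {C : ℝ} (hwC : ∀ v, ‖w v‖ ≤ C * (1 + v ^ 2) ^ 2) : Integrable fun v => G v * w v := by
  refine (h.integrable_weight.const_mul C).mono' (h.continuous.aestronglyMeasurable.mul hw)
    (Eventually.of_forall fun v => ?_)
  rw [norm_mul]
  calc ‖G v‖ * ‖w v‖ ≤ ‖G v‖ * (C * (1 + v ^ 2) ^ 2) := by gcongr; exact hwC v
    _ = C * ((1 + v ^ 2) ^ 2 * ‖G v‖) := by ring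

theorem norm_integral_mul_le (h : HasFourierDensity F G) {w : ℝ → ℂ} {C : ℝ}
    (hwC : ∀ v, ‖w v‖ ≤ C * (1 + v ^ 2) ^ 2) :
    ‖∫ v, G v * w v‖ ≤ (∫ v : ℝ, (1 + v ^ 2) ^ 2 * ‖G v‖) * C := by
  rw [← integral_mul_const]
  refine norm_integral_le_of_norm_le (h.integrable_weight.mul_const C)
    (Eventually.of_forall fun v => ?_)
  rw [norm_mul]
  calc ‖G v‖ * ‖w v‖ ≤ ‖G v‖ * (C * (1 + v ^ 2) ^ 2) := by gcongr; exact hwC v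
    _ = (1 + v ^ 2) ^ 2 * ‖G v‖ * C := by ring

theorem integrable_mul_exp (h : HasFourierDensity F G) (x : ℝ) :
    Integrable fun v : ℝ => G v * Complex.exp (Complex.I * v * x) :=
  h.integrable_mul (C := 1) (Continuous.aestronglyMeasurable (by fun_prop)) fun v => by
    rw [norm_cexp_I_mul]; nlinarith [sq_nonneg v, sq_nonneg (v ^ 2)]

protected lemma integrable (h : HasFourierDensity F G) : Integrable G := by
  simpa using h.integrable_mul_exp 0

theorem integrable_mul_I_mul (h : HasFourierDensity F G) :
    Integrable fun v : ℝ => G v * (Complex.I * v) :=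
  h.integrable_mul (C := 1) (Continuous.aestronglyMeasurable (by fun_prop)) fun v => by
    simp only [norm_mul, Complex.norm_I, one_mul, Complex.norm_real, Real.norm_eq_abs]
    nlinarith [sq_nonneg (|v| - 1), sq_abs v, sq_nonneg (v ^ 2)]

theorem integrable_mul_charFun (h : HasFourierDensity F G) (μ : Measure ℝ)
    [IsProbabilityMeasure μ] : Integrable fun v : ℝ => G v * charFun μ v :=
  h.integrable_mul (C := 1) measurable_charFun.aestronglyMeasurable fun v =>
    (norm_charFun_le_one v).trans (by nlinarith [sq_nonneg v, sq_nonneg (v ^ 2)])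

theorem integral_mul_I_mul (h : HasFourierDensity F G) (hd : HasDerivAt F 0 0) :
    ∫ v : ℝ, G v * (Complex.I * v) = 0 := by
  have hcont := h.continuous
  have hbound := h.integrable_mul_I_mul.norm
  have hderiv := (hasDerivAt_integral_of_dominated_loc_of_deriv_le (μ := volume) (𝕜 := ℝ)
    (F := fun (x : ℝ) (v : ℝ) => G v * Complex.exp (Complex.I * v * x))
    (F' := fun (x : ℝ) (v : ℝ) =>
      G v * (Complex.exp (Complex.I * v * x) * (Complex.I * v)))
    (x₀ := 0) (s := Set.univ) Filter.univ_mem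
    (Eventually.of_forall fun x => by fun_prop) (h.integrable_mul_exp 0) (by fun_prop)
    (Eventually.of_forall fun v x _ => by
      simp only [norm_mul, norm_cexp_I_mul, one_mul, le_refl]) hbound
    (Eventually.of_forall fun v x _ => by
      have hlin : HasDerivAt (fun x : ℝ => Complex.I * v * (x : ℂ)) (Complex.I * v) x := by
        simpa using (Complex.ofRealCLM.hasDerivAt (x := x)).const_mul (Complex.I * v)
      exact hlin.cexp.const_mul _)).2
  simp only [← h.eq_integral] at hderiv
  simpa using hderiv.unique hd.ofReal_comp

theorem integral_eq (h : HasFourierDensity F G) (μ : Measure ℝ) [IsFiniteMeasure μ] :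
    ((∫ x, F x ∂μ : ℝ) : ℂ) = ∫ v : ℝ, G v * charFun μ v := by
  have hint : Integrable (fun p : ℝ × ℝ => G p.2 * Complex.exp (Complex.I * p.2 * p.1))
      (μ.prod volume) := by
    have := h.continuous
    refine (h.integrable.norm.comp_snd μ).mono' (Continuous.aestronglyMeasurable (by fun_prop))
      (Eventually.of_forall fun p => ?_)
    rw [norm_mul, norm_cexp_I_mul, mul_one]
  rw [← integral_complex_ofReal]
  simp_rw [h.eq_integral]
  rw [integral_integral_swap hint]
  congr 1 with v
  rw [integral_const_mul, charFun_apply_real]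
  congr 2 with x
  ring_nf

theorem comp_sub_left (h : HasFourierDensity F G) (z : ℝ) :
    HasFourierDensity (fun y => F (z - y))
      fun v => G (-v) * Complex.exp (Complex.I * (-v : ℝ) * z) where
  continuous := by have := h.continuous; fun_prop
  integrable_weight := by
    simpa only [norm_mul, norm_cexp_I_mul, mul_one, neg_sq] using h.integrable_weight.comp_neg
  eq_integral x := by
    rw [h.eq_integral, ← integral_neg_eq_self]
    congr 1 with v
    rw [mul_assoc (G (-v)), ← Complex.exp_add]
    congr 2
    push_cast; ring

theorem integral_mul_levyKernel (h : HasFourierDensity F G) (hd : HasDerivAt F 0 0) (x : ℝ) :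
    ∫ v : ℝ, G v * levyKernel v x = ((F x - F 0 : ℝ) : ℂ) := by
  have hsplit (v : ℝ) : G v * levyKernel v x
      = G v * Complex.exp (Complex.I * v * x) - G v * Complex.exp (Complex.I * v * (0 : ℝ))
        - x * (G v * (Complex.I * v)) := by
    simp only [levyKernel, Complex.ofReal_zero, mul_zero, Complex.exp_zero]; ring
  simp_rw [hsplit]
  rw [integral_sub ((h.integrable_mul_exp x).sub' (h.integrable_mul_exp 0))
    (h.integrable_mul_I_mul.const_mul _),
    integral_sub (h.integrable_mul_exp x) (h.integrable_mul_exp 0), integral_const_mul,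
    h.integral_mul_I_mul hd, ← h.eq_integral, ← h.eq_integral]
  push_cast; ring

theorem integrable_mul_jumpExponent (h : HasFourierDensity F G) (β : ℝ) {ν : Measure ℝ}
    (hν : Integrable sqMinAbs ν) : Integrable fun v : ℝ => G v * jumpExponent β ν v :=
  h.integrable_mul (C := 2 * jumpActivity β ν) (continuous_jumpExponent β hν).aestronglyMeasurable
    fun v => (norm_jumpExponent_le β hν v).trans <| by
      have := jumpActivity_nonneg β ν
      gcongr
      nlinarith [sq_nonneg v, sq_nonneg (v ^ 2)]

theorem integral_mul_jumpExponent (h : HasFourierDensity F G) (hd : HasDerivAt F 0 0) (β : ℝ)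
    {ν : Measure ℝ} [SFinite ν] (hν : Integrable sqMinAbs ν) :
    ∫ v : ℝ, G v * jumpExponent β ν v = ((∫ x, (F x - F 0) ∂ν : ℝ) : ℂ) := by
  have hint : Integrable (fun p : ℝ × ℝ => G p.1 * levyKernel p.1 p.2) (volume.prod ν) := by
    have hw : Integrable fun v => (1 + v ^ 2) * ‖G v‖ := by
      refine h.integrable_weight.mono'
        (by have := h.continuous; fun_prop) (Eventually.of_forall fun v => ?_)
      rw [Real.norm_of_nonneg (by positivity)]
      gcongr
      nlinarith [sq_nonneg v, sq_nonneg (v ^ 2)]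
    refine ((hw.mul_prod hν).const_mul 2).mono'
      ((h.continuous.comp continuous_fst).mul continuous_uncurry_levyKernel).aestronglyMeasurable
      (Eventually.of_forall fun p => ?_)
    rw [norm_mul]
    calc _ ≤ ‖G p.1‖ * (2 * (1 + p.1 ^ 2) * sqMinAbs p.2) := by gcongr; exact norm_levyKernel_le _ _
      _ = _ := by ring
  have hsplit (v : ℝ) : G v * jumpExponent β ν v
      = β * (G v * (Complex.I * v)) + ∫ x, G v * levyKernel v x ∂ν := by
    rw [jumpExponent, integral_const_mul]; ring
  simp_rw [hsplit]
  rw [integral_add (h.integrable_mul_I_mul.const_mul _) hint.integral_prod_left,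
    integral_const_mul, h.integral_mul_I_mul hd, mul_zero, zero_add, integral_integral_swap hint,
    ← integral_complex_ofReal]
  congr 1 with x
  exact h.integral_mul_levyKernel hd x

end HasFourierDensity

namespace HasLevyTriplet

variable {μ ν : Measure ℝ} {β : ℝ} {s : ℝ≥0}

theorem norm_charFun_sub_one_le (h : HasLevyTriplet μ β s ν) (v : ℝ) :
    ‖charFun μ v - 1‖ ≤ 2 * (jumpActivity β ν + s) * (1 + v ^ 2) := by
  have hre : (-(s * v ^ 2 / 2 : ℝ) + jumpExponent β ν v).re ≤ 0 := by
    have : 0 ≤ s * v ^ 2 / 2 := by positivity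
    rw [Complex.add_re, ← Complex.ofReal_neg, Complex.ofReal_re]
    linarith [jumpExponent_re_nonpos β h.integrable_sqMinAbs v]
  have hgauss : ‖(-(s * v ^ 2 / 2 : ℝ) : ℂ)‖ ≤ 2 * s * (1 + v ^ 2) := by
    rw [norm_neg, Complex.norm_real, Real.norm_of_nonneg (by positivity)]
    nlinarith [mul_nonneg s.2 (sq_nonneg v), s.2]
  rw [h.charFun_eq]
  calc _ ≤ _ := norm_cexp_sub_one_le_of_re_nonpos hre
    _ ≤ _ := norm_add_le _ _
    _ ≤ _ := add_le_add hgauss (norm_jumpExponent_le β h.integrable_sqMinAbs v)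
    _ = _ := by ring

theorem norm_charFun_sub_charFun_gaussianReal_sub_le (h : HasLevyTriplet μ β s ν) (v : ℝ) :
    ‖charFun μ v - charFun (gaussianReal 0 s) v - jumpExponent β ν v‖
      ≤ 4 * (jumpActivity β ν * (jumpActivity β ν + s)) * (1 + v ^ 2) ^ 2 := by
  set g : ℂ := -(s * v ^ 2 / 2 : ℝ) with hg
  set w : ℂ := jumpExponent β ν v
  have hgauss : charFun (gaussianReal 0 s) v = Complex.exp g := by
    rw [charFun_gaussianReal, hg]
    congr 1
    push_cast; ring
  have hgre : g.re ≤ 0 := by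
    rw [hg, ← Complex.ofReal_neg, Complex.ofReal_re, neg_nonpos]
    positivity
  have hgn : ‖g‖ ≤ 2 * s * (1 + v ^ 2) := by
    rw [hg, norm_neg, Complex.norm_real, Real.norm_of_nonneg (by positivity)]
    nlinarith [mul_nonneg s.2 (sq_nonneg v), s.2]
  have hwn : ‖w‖ ≤ 2 * jumpActivity β ν * (1 + v ^ 2) :=
    norm_jumpExponent_le β h.integrable_sqMinAbs v
  have hA := jumpActivity_nonneg β ν
  have hexp : ‖Complex.exp g‖ ≤ 1 := by
    rw [Complex.norm_exp]; exact Real.exp_le_one_iff.2 hgre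
  have hsplit : charFun μ v - charFun (gaussianReal 0 s) v - w
      = Complex.exp g * (Complex.exp w - 1 - w) + (Complex.exp g - 1) * w := by
    rw [h.charFun_eq, hgauss, Complex.exp_add]; ring
  calc ‖charFun μ v - charFun (gaussianReal 0 s) v - w‖
      ≤ ‖Complex.exp g‖ * ‖Complex.exp w - 1 - w‖ + ‖Complex.exp g - 1‖ * ‖w‖ := by
        rw [hsplit, ← norm_mul, ← norm_mul]; exact norm_add_le _ _
    _ ≤ 1 * ‖w‖ ^ 2 + ‖g‖ * ‖w‖ := by
        gcongr
        · exact norm_cexp_sub_one_sub_id_le_of_re_nonpos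
            (jumpExponent_re_nonpos β h.integrable_sqMinAbs v)
        · exact norm_cexp_sub_one_le_of_re_nonpos hgre
    _ = ‖w‖ * (‖w‖ + ‖g‖) := by ring
    _ ≤ (2 * jumpActivity β ν * (1 + v ^ 2)) *
          (2 * jumpActivity β ν * (1 + v ^ 2) + 2 * s * (1 + v ^ 2)) := by gcongr
    _ = _ := by ring

end HasLevyTriplet

section SmoothEstimates

variable {F : ℝ → ℝ}

theorem exists_abs_integral_comp_sub_sub_le (hF : ContDiff ℝ (⊤ : ℕ∞) F)
    (hc : HasCompactSupport F) :
    ∃ K : ℝ, 0 ≤ K ∧ ∀ (μ ν : Measure ℝ) [IsProbabilityMeasure μ] (β : ℝ) (s : ℝ≥0),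
      HasLevyTriplet μ β s ν → ∀ z : ℝ,
        |∫ y, F (z - y) ∂μ - F z| ≤ K * (jumpActivity β ν + s) := by
  obtain ⟨G, hG⟩ := exists_hasFourierDensity hF hc
  set I : ℝ := ∫ v : ℝ, (1 + v ^ 2) ^ 2 * ‖G v‖ with hI
  refine ⟨I * 2, mul_nonneg (integral_nonneg fun v => by positivity) zero_le_two,
    fun μ ν _ β s h z => ?_⟩
  set H : ℝ → ℂ := fun v => G (-v) * Complex.exp (Complex.I * (-v : ℝ) * z)
  have hH : HasFourierDensity (fun y => F (z - y)) H := hG.comp_sub_left z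
  have hIH : ∫ v : ℝ, (1 + v ^ 2) ^ 2 * ‖H v‖ = I := by
    rw [hI, ← integral_neg_eq_self]
    simp only [H, norm_mul, norm_cexp_I_mul, mul_one, neg_sq, neg_neg]
  have hrep : ((∫ y, F (z - y) ∂μ - F z : ℝ) : ℂ) = ∫ v, H v * (charFun μ v - 1) := by
    have h0 := hH.eq_integral 0
    simp only [sub_zero, Complex.ofReal_zero, mul_zero, Complex.exp_zero, mul_one] at h0
    simp_rw [mul_sub_one]
    rw [Complex.ofReal_sub, hH.integral_eq μ, h0,
      integral_sub (hH.integrable_mul_charFun μ) hH.integrable]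
  have hact := jumpActivity_nonneg β ν
  rw [← Real.norm_eq_abs, ← Complex.norm_real, hrep, mul_assoc, ← hIH]
  refine hH.norm_integral_mul_le fun v => (h.norm_charFun_sub_one_le v).trans ?_
  gcongr
  nlinarith [sq_nonneg v, sq_nonneg (v ^ 2)]

theorem exists_abs_integral_sub_gaussianReal_sub_le (hF : ContDiff ℝ (⊤ : ℕ∞) F)
    (hc : HasCompactSupport F) (hd : HasDerivAt F 0 0) :
    ∃ K : ℝ, 0 ≤ K ∧ ∀ (μ ν : Measure ℝ) [IsProbabilityMeasure μ] [SFinite ν] (β : ℝ) (s : ℝ≥0),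
      HasLevyTriplet μ β s ν →
        |∫ y, F y ∂μ - ∫ y, F y ∂(gaussianReal 0 s) - ∫ x, (F x - F 0) ∂ν|
          ≤ K * (jumpActivity β ν * (jumpActivity β ν + s)) := by
  obtain ⟨G, hG⟩ := exists_hasFourierDensity hF hc
  refine ⟨(∫ v : ℝ, (1 + v ^ 2) ^ 2 * ‖G v‖) * 4,
    mul_nonneg (integral_nonneg fun v => by positivity) zero_le_four, fun μ ν _ _ β s h => ?_⟩
  have hν := h.integrable_sqMinAbs
  have hrep : ((∫ y, F y ∂μ - ∫ y, F y ∂(gaussianReal 0 s) - ∫ x, (F x - F 0) ∂ν : ℝ) : ℂ)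
      = ∫ v, G v * (charFun μ v - charFun (gaussianReal 0 s) v - jumpExponent β ν v) := by
    simp_rw [mul_sub]
    rw [integral_sub ((hG.integrable_mul_charFun μ).sub' (hG.integrable_mul_charFun _))
      (hG.integrable_mul_jumpExponent β hν), integral_sub (hG.integrable_mul_charFun μ)
      (hG.integrable_mul_charFun _), hG.integral_mul_jumpExponent hd β hν, ← hG.integral_eq,
      ← hG.integral_eq, Complex.ofReal_sub, Complex.ofReal_sub]
  rw [← Real.norm_eq_abs, ← Complex.norm_real, hrep, mul_assoc]
  exact hG.norm_integral_mul_le h.norm_charFun_sub_charFun_gaussianReal_sub_le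

end SmoothEstimates

/-! ### Compound Poisson laws and existence -/

/-- The `n`-fold convolution power of a measure on the line. -/
def convPow (ρ : Measure ℝ) : ℕ → Measure ℝ
  | 0 => Measure.dirac 0
  | n + 1 => convPow ρ n ∗ ρ

/-- The compound Poisson law with jump measure `ρ`, i.e. `e^{-ρ(ℝ)} ∑ ρ^{∗n} / n!`. -/
def compoundPoisson (ρ : Measure ℝ) : Measure ℝ :=
  Measure.sum fun n : ℕ =>
    ENNReal.ofReal (Real.exp (-ρ.real univ) / n.factorial) • convPow ρ n

section CompoundPoisson

variable (ρ : Measure ℝ)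

theorem hasSum_poissonWeight :
    HasSum (fun n : ℕ => Real.exp (-ρ.real univ) / n.factorial * ρ.real univ ^ n) 1 := by
  simp only [div_mul_eq_mul_div]
  exact hasSum_one_poissonMeasure ⟨ρ.real univ, measureReal_nonneg⟩

theorem hasSum_integral_compoundPoisson {E : Type*} [NormedAddCommGroup E] [NormedSpace ℝ E]
    {g : ℝ → E} (hg : Integrable g (compoundPoisson ρ)) :
    HasSum (fun n : ℕ => (Real.exp (-ρ.real univ) / n.factorial) • ∫ x, g x ∂(convPow ρ n))
      (∫ x, g x ∂(compoundPoisson ρ)) := by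
  refine (hasSum_integral_measure hg).congr_fun fun n => ?_
  rw [integral_smul_measure, ENNReal.toReal_ofReal (by positivity)]

variable [IsFiniteMeasure ρ]

instance isFiniteMeasure_convPow (n : ℕ) : IsFiniteMeasure (convPow ρ n) := by
  induction n with
  | zero => simp only [convPow]; infer_instance
  | succ n ih => simp only [convPow]; infer_instance

theorem charFun_convPow (n : ℕ) (u : ℝ) : charFun (convPow ρ n) u = charFun ρ u ^ n := by
  induction n with
  | zero => simp [convPow, charFun_dirac]
  | succ n ih => simp only [convPow, charFun_conv, ih, pow_succ]

theorem measureReal_univ_convPow (n : ℕ) : (convPow ρ n).real univ = ρ.real univ ^ n := by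
  have := charFun_convPow ρ n 0
  simp only [charFun_zero] at this
  exact_mod_cast this

instance isProbabilityMeasure_compoundPoisson : IsProbabilityMeasure (compoundPoisson ρ) where
  measure_univ := by
    have hsum := hasSum_poissonWeight ρ
    have hterm (n : ℕ) : (ENNReal.ofReal (Real.exp (-ρ.real univ) / n.factorial) • convPow ρ n) univ
        = ENNReal.ofReal (Real.exp (-ρ.real univ) / n.factorial * ρ.real univ ^ n) := by
      rw [Measure.smul_apply, smul_eq_mul, ENNReal.ofReal_mul (by positivity),
        ← measureReal_univ_convPow, ofReal_measureReal]
    rw [compoundPoisson, Measure.sum_apply _ MeasurableSet.univ]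
    simp_rw [hterm]
    rw [← ENNReal.ofReal_tsum_of_nonneg (fun n => by positivity) hsum.summable, hsum.tsum_eq,
      ENNReal.ofReal_one]

theorem charFun_compoundPoisson (u : ℝ) :
    charFun (compoundPoisson ρ) u = Complex.exp (charFun ρ u - ρ.real univ) := by
  have hint : Integrable (BoundedContinuousFunction.innerProbChar u) (compoundPoisson ρ) :=
    BoundedContinuousFunction.integrable _ _
  have hexp := (NormedSpace.expSeries_div_hasSum_exp (charFun ρ u)).mul_left
    (Complex.exp (-ρ.real univ))
  rw [← Complex.exp_eq_exp_ℂ, ← Complex.exp_add, neg_add_eq_sub] at hexp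
  rw [charFun_eq_integral_innerProbChar]
  refine (hasSum_integral_compoundPoisson ρ hint).unique (hexp.congr_fun fun n => ?_)
  rw [← charFun_eq_integral_innerProbChar, charFun_convPow, Complex.real_smul]
  push_cast
  ring

theorem abs_integral_compoundPoisson_sub_le {g : ℝ → ℝ} (hgm : Measurable g) {A : ℝ}
    (hgA : ∀ x, |g x| ≤ A) :
    |∫ x, g x ∂(compoundPoisson ρ) - ∫ x, g x ∂ρ| ≤ |g 0| + 2 * A * ρ.real univ ^ 2 := by
  set l := ρ.real univ
  have hl : 0 ≤ l := measureReal_nonneg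
  have hA : 0 ≤ A := (abs_nonneg _).trans (hgA 0)
  have hint (m : Measure ℝ) [IsFiniteMeasure m] : |∫ x, g x ∂m| ≤ A * m.real univ :=
    (Real.norm_eq_abs _).symm.trans_le <|
      norm_integral_le_of_norm_le_const (Eventually.of_forall hgA)
  have htail : |∫ x, g x ∂(compoundPoisson ρ) - Real.exp (-l) * (g 0 + ∫ x, g x ∂ρ)|
      ≤ A * (1 - Real.exp (-l) * (1 + l)) := by
    have hsum := (hasSum_nat_add_iff' 2).2 <| hasSum_integral_compoundPoisson ρ <|
      Integrable.of_bound hgm.aestronglyMeasurable A (Eventually.of_forall hgA)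
    have hweight := (hasSum_nat_add_iff' 2).2 ((hasSum_poissonWeight ρ).mul_left A)
    have := hsum.norm_le_of_bounded hweight fun n => by
      rw [norm_smul, Real.norm_of_nonneg (by positivity), mul_left_comm,
        ← measureReal_univ_convPow]
      gcongr
      exact hint _
    refine le_of_eq_of_le ?_ (this.trans_eq ?_)
    · simp [Finset.sum_range_succ, convPow, l, mul_add]
    · simp [Finset.sum_range_succ, l]; ring
  have hexp : 1 - l ≤ Real.exp (-l) := by linarith [Real.add_one_le_exp (-l)]
  have hexp1 : Real.exp (-l) ≤ 1 := Real.exp_le_one_iff.2 (by linarith)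
  have hzero : |Real.exp (-l) * g 0| ≤ |g 0| := by
    rw [abs_mul, abs_of_pos (Real.exp_pos _)]
    exact mul_le_of_le_one_left (abs_nonneg _) hexp1
  have hone : |(1 - Real.exp (-l)) * ∫ x, g x ∂ρ| ≤ l * (A * l) := by
    rw [abs_mul, abs_of_nonneg (by linarith)]
    gcongr
    · linarith
    · exact hint ρ
  have hweight : A * (1 - Real.exp (-l) * (1 + l)) ≤ A * l ^ 2 := by
    gcongr
    nlinarith
  rw [abs_le] at *
  constructor <;> linarith

end CompoundPoisson

section FirstMoment

variable {ν : Measure ℝ} {r : ℝ}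

theorem abs_le_mul_sqMinAbs (hr : 0 < r) {x : ℝ} (hx : r ≤ |x|) :
    |x| ≤ max 1 r⁻¹ * sqMinAbs x := by
  have hsq : |x| ≤ r⁻¹ * x ^ 2 := by
    rw [← sq_abs, inv_mul_eq_div, le_div_iff₀ hr, sq]
    gcongr
  rw [sqMinAbs, mul_min_of_nonneg _ _ (by positivity)]
  refine le_min (hsq.trans ?_) (le_mul_of_one_le_left (abs_nonneg x) (le_max_left _ _))
  gcongr
  exact le_max_right _ _

theorem measurableSet_lt_abs (r : ℝ) : MeasurableSet {x : ℝ | r < |x|} :=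
  measurableSet_lt measurable_const measurable_norm

theorem integrable_id_restrict_lt_abs (hν : Integrable sqMinAbs ν) (hr : 0 < r) :
    Integrable (fun x => x) (ν.restrict {x | r < |x|}) :=
  (hν.restrict.const_mul (max 1 r⁻¹)).mono' aestronglyMeasurable_id <|
    (ae_restrict_mem (measurableSet_lt_abs r)).mono fun _ hx => abs_le_mul_sqMinAbs hr (le_of_lt hx)

theorem isFiniteMeasure_restrict_lt_abs (hν : Integrable sqMinAbs ν) (hr : 0 < r) :
    IsFiniteMeasure (ν.restrict {x | r < |x|}) := by
  refine ⟨?_⟩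
  have hfin := (integrable_id_restrict_lt_abs hν hr).measure_norm_ge_lt_top hr
  refine lt_of_le_of_lt ?_ hfin
  rw [Measure.restrict_apply_univ, Measure.restrict_apply (measurableSet_le (by fun_prop)
    (by fun_prop))]
  exact measure_mono fun x hx => ⟨(show r < |x| from hx).le, hx⟩

theorem jumpExponent_eq_charFun_sub {ρ : Measure ℝ} [IsFiniteMeasure ρ]
    (hρ : Integrable (fun x => x) ρ) (u : ℝ) :
    jumpExponent (∫ x, x ∂ρ) ρ u = charFun ρ u - ρ.real univ := by
  have hexp : Integrable (fun x : ℝ => Complex.exp (Complex.I * u * x)) ρ :=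
    Integrable.of_bound (by fun_prop) 1 (Eventually.of_forall fun x => (norm_cexp_I_mul u x).le)
  have hchar : charFun ρ u = ∫ x : ℝ, Complex.exp (Complex.I * u * x) ∂ρ := by
    rw [charFun_apply_real]
    congr 1 with x
    ring_nf
  have hlin : Integrable (fun x : ℝ => Complex.I * u * (x : ℂ)) ρ := hρ.ofReal.const_mul _
  simp only [jumpExponent, levyKernel]
  rw [integral_sub (hexp.sub' (integrable_const _)) hlin,
    integral_sub hexp (integrable_const _), integral_const_mul, integral_complex_ofReal, hchar,
    integral_const]
  simp
  ring

end FirstMoment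

theorem HasLevyTriplet.conv {μ μ' ν ν' : Measure ℝ} [IsFiniteMeasure μ] [IsFiniteMeasure μ']
    {β β' : ℝ} {s s' : ℝ≥0} (h : HasLevyTriplet μ β s ν) (h' : HasLevyTriplet μ' β' s' ν') :
    HasLevyTriplet (μ ∗ μ') (β + β') (s + s') (ν + ν') where
  integrable_sqMinAbs := h.integrable_sqMinAbs.add_measure h'.integrable_sqMinAbs
  charFun_eq u := by
    rw [charFun_conv, h.charFun_eq, h'.charFun_eq, ← Complex.exp_add,
      jumpExponent_add_measure β β' h.integrable_sqMinAbs h'.integrable_sqMinAbs]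
    congr 1
    push_cast
    ring

theorem hasLevyTriplet_gaussianReal (β : ℝ) (s : ℝ≥0) :
    HasLevyTriplet (gaussianReal β s) β s 0 where
  integrable_sqMinAbs := integrable_zero_measure
  charFun_eq u := by
    rw [charFun_gaussianReal, jumpExponent, integral_zero_measure]
    congr 1
    push_cast
    ring

theorem hasLevyTriplet_compoundPoisson {ρ : Measure ℝ} [IsFiniteMeasure ρ]
    (hρ : Integrable (fun x => x) ρ) :
    HasLevyTriplet (compoundPoisson ρ) (∫ x, x ∂ρ) 0 ρ where
  integrable_sqMinAbs := hρ.norm.mono' continuous_sqMinAbs.aestronglyMeasurable <|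
    Eventually.of_forall fun x => by
      rw [Real.norm_of_nonneg (sqMinAbs_nonneg x)]; exact min_le_right _ _
  charFun_eq u := by simp [charFun_compoundPoisson, jumpExponent_eq_charFun_sub hρ]

theorem HasLevyTriplet.unique {μ μ' ν : Measure ℝ} [IsFiniteMeasure μ] [IsFiniteMeasure μ']
    {β : ℝ} {s : ℝ≥0} (h : HasLevyTriplet μ β s ν) (h' : HasLevyTriplet μ' β s ν) : μ = μ' :=
  Measure.ext_of_charFun (funext fun u => by rw [h.charFun_eq, h'.charFun_eq])

theorem exists_hasLevyTriplet_of_isFiniteMeasure {ρ : Measure ℝ} [IsFiniteMeasure ρ]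
    (hρ : Integrable (fun x => x) ρ) (β : ℝ) (s : ℝ≥0) :
    ∃ μ : Measure ℝ, IsProbabilityMeasure μ ∧ HasLevyTriplet μ β s ρ :=
  ⟨gaussianReal (β - ∫ x, x ∂ρ) s ∗ compoundPoisson ρ, inferInstance, by
    simpa using (hasLevyTriplet_gaussianReal (β - ∫ x, x ∂ρ) s).conv
      (hasLevyTriplet_compoundPoisson hρ)⟩

theorem exists_charFun_eq_of_tendsto {μ : ℕ → Measure ℝ} [∀ n, IsProbabilityMeasure (μ n)]
    {f : ℝ → ℂ} (hf : ContinuousAt f 0)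
    (h : ∀ t, Tendsto (fun n => charFun (μ n) t) atTop (𝓝 (f t))) :
    ∃ T : Measure ℝ, IsProbabilityMeasure T ∧ ∀ t, charFun T t = f t := by
  have htight : IsTightMeasureSet (Set.range μ) := isTightMeasureSet_of_tendsto_charFun hf h
  let m : ℕ → ProbabilityMeasure ℝ := fun n => ⟨μ n, inferInstance⟩
  have hcompact : IsCompact (closure {ρ | ∃ n, m n = ρ}) := by
    apply isCompact_closure_of_isTightMeasureSet
    refine htight.subset ?_
    rintro _ ⟨ρ, ⟨n, rfl⟩, rfl⟩
    exact ⟨n, rfl⟩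
  let U : Ultrafilter ℕ := Filter.hyperfilter ℕ
  have hU : (U : Filter ℕ) ≤ atTop := Nat.cofinite_eq_atTop ▸ Filter.hyperfilter_le_cofinite
  obtain ⟨T, -, hT⟩ := hcompact.ultrafilter_le_nhds (U.map m)
    (.trans (by simp) (monotone_principal subset_closure))
  replace hT : Tendsto m U (𝓝 T) := hT
  refine ⟨T, inferInstance, fun t => ?_⟩
  rw [ProbabilityMeasure.tendsto_iff_forall_integral_rclike_tendsto ℂ] at hT
  have hchar := hT (BoundedContinuousFunction.innerProbChar t)
  simp_rw [← charFun_eq_integral_innerProbChar] at hchar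
  exact tendsto_nhds_unique hchar ((h t).mono_left hU)

theorem tendsto_jumpExponent_restrict_lt_abs (β : ℝ) {ν : Measure ℝ} (hν : Integrable sqMinAbs ν)
    (u : ℝ) :
    Tendsto (fun n : ℕ => jumpExponent β (ν.restrict {x | 1 / ((n : ℝ) + 1) < |x|}) u) atTop
      (𝓝 (jumpExponent β ν u)) := by
  refine tendsto_const_nhds.add ?_
  have hmono : Monotone fun n : ℕ => {x : ℝ | 1 / ((n : ℝ) + 1) < |x|} := by
    refine fun m n hmn x (hx : _ < |x|) => lt_of_le_of_lt ?_ hx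
    gcongr
  have hlim := tendsto_setIntegral_of_monotone (μ := ν)
    (fun n : ℕ => measurableSet_lt_abs (1 / ((n : ℝ) + 1))) hmono
    (integrable_levyKernel hν u).integrableOn
  rwa [setIntegral_eq_integral_of_forall_compl_eq_zero] at hlim
  intro x hx
  by_cases hx0 : x = 0
  · rw [hx0, levyKernel_zero_right]
  · obtain ⟨n, hn⟩ := exists_nat_one_div_lt (abs_pos.2 hx0)
    exact absurd (mem_iUnion.2 ⟨n, hn⟩) hx

theorem exists_hasLevyTriplet (β : ℝ) (s : ℝ≥0) {ν : Measure ℝ} (hν : Integrable sqMinAbs ν) :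
    ∃ μ : Measure ℝ, IsProbabilityMeasure μ ∧ HasLevyTriplet μ β s ν := by
  have happrox (n : ℕ) : ∃ μ : Measure ℝ, IsProbabilityMeasure μ ∧
      HasLevyTriplet μ β s (ν.restrict {x | 1 / ((n : ℝ) + 1) < |x|}) :=
    have := isFiniteMeasure_restrict_lt_abs hν (r := 1 / ((n : ℝ) + 1)) (by positivity)
    exists_hasLevyTriplet_of_isFiniteMeasure (integrable_id_restrict_lt_abs hν (by positivity)) β s
  choose μ hμ htriplet using happrox
  have hcont : ContinuousAt
      (fun u : ℝ => Complex.exp (-(s * u ^ 2 / 2 : ℝ) + jumpExponent β ν u)) 0 := by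
    have := continuous_jumpExponent β hν
    fun_prop
  obtain ⟨T, hT, hTu⟩ := exists_charFun_eq_of_tendsto (μ := μ) hcont fun u => by
    simp_rw [(htriplet _).charFun_eq]
    exact (Complex.continuous_exp.tendsto _).comp
      ((tendsto_jumpExponent_restrict_lt_abs β hν u).const_add _)
  exact ⟨T, hT, hν, hTu⟩

theorem HasLevyTriplet.exists_eq_conv_compoundPoisson {μ ν : Measure ℝ} [IsFiniteMeasure μ]
    {β : ℝ} {s : ℝ≥0} (h : HasLevyTriplet μ β s ν) {r : ℝ} (hr : 0 < r) :
    ∃ M : Measure ℝ, IsProbabilityMeasure M ∧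
      HasLevyTriplet M (β - ∫ x in {x | r < |x|}, x ∂ν) s (ν.restrict {x | |x| ≤ r}) ∧
      μ = M ∗ compoundPoisson (ν.restrict {x | r < |x|}) := by
  have hν := h.integrable_sqMinAbs
  have := isFiniteMeasure_restrict_lt_abs hν hr
  obtain ⟨M, hM, hMt⟩ := exists_hasLevyTriplet (β - ∫ x in {x | r < |x|}, x ∂ν) s
    (hν.restrict (s := {x | |x| ≤ r}))
  refine ⟨M, hM, hMt, h.unique ?_⟩
  have hcompl : {x : ℝ | r < |x|} = {x : ℝ | |x| ≤ r}ᶜ := by ext x; simp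
  have hconv := hMt.conv (hasLevyTriplet_compoundPoisson (integrable_id_restrict_lt_abs hν hr))
  rw [sub_add_cancel, add_zero] at hconv
  convert hconv using 1
  rw [hcompl, Measure.restrict_add_restrict_compl
    (measurableSet_le (by fun_prop) (by fun_prop))]

/-! ### Functions supported away from the origin -/

section SmallJumps

theorem exists_measureReal_le_abs_le {r : ℝ} (hr : 0 < r) :
    ∃ K : ℝ, 0 ≤ K ∧ ∀ (μ ν : Measure ℝ) [IsProbabilityMeasure μ] [SFinite ν] (β : ℝ) (s : ℝ≥0),
      HasLevyTriplet μ β s ν → (∀ᵐ x ∂ν, |x| ≤ r) →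
        μ.real {x | 2 * r ≤ |x|} ≤ (gaussianReal 0 s).real {x | r ≤ |x|}
          + K * (jumpActivity β ν * (jumpActivity β ν + s)) := by
  let χ : ContDiffBump (0 : ℝ) := ⟨r, 2 * r, hr, by linarith⟩
  have hone {x : ℝ} (hx : |x| ≤ r) : χ x = 1 := χ.one_of_mem_closedBall (by simpa [χ] using hx)
  have hzero {x : ℝ} (hx : 2 * r ≤ |x|) : χ x = 0 := χ.zero_of_le_dist (by simpa [χ] using hx)
  have hderiv : HasDerivAt χ 0 0 :=
    (hasDerivAt_const (0 : ℝ) (1 : ℝ)).congr_of_eventuallyEq χ.eventuallyEq_one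
  obtain ⟨K, hK, hbound⟩ :=
    exists_abs_integral_sub_gaussianReal_sub_le χ.contDiff χ.hasCompactSupport hderiv
  refine ⟨K, hK, fun μ ν _ _ β s h hν => ?_⟩
  have hint (m : Measure ℝ) [IsProbabilityMeasure m] : Integrable χ m :=
    χ.continuous.integrable_of_hasCompactSupport χ.hasCompactSupport
  have hμ : ∫ x, χ x ∂μ ≤ 1 - μ.real {x | 2 * r ≤ |x|} := by
    have hmeas : MeasurableSet {x : ℝ | 2 * r ≤ |x|} :=
      measurableSet_le measurable_const measurable_norm
    rw [← probReal_compl_eq_one_sub hmeas, ← integral_indicator_one hmeas.compl]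
    refine integral_mono (hint μ) ((integrable_const 1).indicator hmeas.compl) fun x => ?_
    by_cases hx : 2 * r ≤ |x|
    · simp [hx, hzero hx]
    · simp [hx, χ.le_one]
  have hgauss : 1 - (gaussianReal 0 s).real {x | r ≤ |x|} ≤ ∫ x, χ x ∂(gaussianReal 0 s) := by
    have hmeas : MeasurableSet {x : ℝ | r ≤ |x|} :=
      measurableSet_le measurable_const measurable_norm
    rw [← probReal_compl_eq_one_sub hmeas, ← integral_indicator_one hmeas.compl]
    refine integral_mono ((integrable_const 1).indicator hmeas.compl) (hint _) fun x => ?_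
    by_cases hx : r ≤ |x|
    · simp [hx, χ.nonneg]
    · simp [hx, hone (not_le.1 hx).le]
  have hjump : ∫ x, (χ x - χ 0) ∂ν = 0 :=
    integral_eq_zero_of_ae <| hν.mono fun x hx => by simp [hone hx, hone (abs_zero.trans_le hr.le)]
  have := abs_le.1 (hbound μ ν β s h)
  linarith

variable {ν : Measure ℝ} {r : ℝ}

theorem mul_measureReal_lt_abs_le (hν : Integrable sqMinAbs ν) (hr : 0 < r) :
    r * ν.real {x | r < |x|} ≤ max 1 r⁻¹ * ∫ x, sqMinAbs x ∂ν := by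
  have := isFiniteMeasure_restrict_lt_abs hν hr
  have hset : ∫ _ in {x | r < |x|}, r ∂ν = r * ν.real {x | r < |x|} := by
    rw [setIntegral_const, smul_eq_mul, mul_comm]
  rw [← hset, ← integral_const_mul]
  refine (setIntegral_mono_on (integrable_const r) (hν.const_mul _).integrableOn
    (measurableSet_lt_abs r) fun x (hx : r < |x|) =>
      hx.le.trans (abs_le_mul_sqMinAbs hr hx.le)).trans
    (setIntegral_le_integral (hν.const_mul _) (Eventually.of_forall fun x => ?_))
  exact mul_nonneg (by positivity) (sqMinAbs_nonneg x)

theorem jumpActivity_restrict_le (hν : Integrable sqMinAbs ν) (hr : 0 < r) (β : ℝ) :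
    jumpActivity (β - ∫ x in {x | r < |x|}, x ∂ν) (ν.restrict {x | |x| ≤ r})
      ≤ max 1 r⁻¹ * jumpActivity β ν := by
  have hcompl : {x : ℝ | |x| ≤ r} = {x : ℝ | r < |x|}ᶜ := by ext x; simp
  have hbig : |∫ x in {x | r < |x|}, x ∂ν| ≤ max 1 r⁻¹ * ∫ x in {x | r < |x|}, sqMinAbs x ∂ν := by
    rw [← integral_const_mul]
    exact norm_integral_le_of_norm_le (f := fun x => x) (hν.restrict.const_mul _) <|
      (ae_restrict_mem (measurableSet_lt_abs r)).mono fun _ hx =>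
        abs_le_mul_sqMinAbs hr (le_of_lt hx)
  have hsmall : 0 ≤ ∫ x in {x | |x| ≤ r}, sqMinAbs x ∂ν := integral_nonneg sqMinAbs_nonneg
  have hsplit : ∫ x in {x | r < |x|}, sqMinAbs x ∂ν + ∫ x in {x | |x| ≤ r}, sqMinAbs x ∂ν
      = ∫ x, sqMinAbs x ∂ν := hcompl ▸ integral_add_compl (measurableSet_lt_abs r) hν
  have hβ : |β| ≤ max 1 r⁻¹ * |β| := le_mul_of_one_le_left (abs_nonneg β) (le_max_left _ _)
  have hsmall' := le_mul_of_one_le_left hsmall (le_max_left 1 r⁻¹)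
  have := abs_sub β (∫ x in {x | r < |x|}, x ∂ν)
  simp only [jumpActivity]
  rw [← hsplit]
  linarith

end SmallJumps

section CutOff

variable {M ρ ν : Measure ℝ} {f a : ℝ → ℝ} {A B D r R : ℝ}

theorem abs_integral_le_of_abs_le {m : Measure ℝ} {g : ℝ → ℝ} (hg : Integrable g m)
    (hfg : ∀ x, |f x| ≤ g x) : |∫ x, f x ∂m| ≤ ∫ x, g x ∂m :=
  (Real.norm_eq_abs _).symm.trans_le <|
    norm_integral_le_of_norm_le hg (Eventually.of_forall hfg)

theorem abs_integral_mul_le_mul_integral_abs {m : Measure ℝ} (ha : Integrable a m)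
    (hfA : ∀ x, |f x| ≤ A) : |∫ x, f x * a x ∂m| ≤ A * ∫ x, |a x| ∂m := by
  rw [← integral_const_mul]
  refine abs_integral_le_of_abs_le (ha.abs.const_mul A) fun x => ?_
  rw [abs_mul]
  exact mul_le_mul_of_nonneg_right (hfA x) (abs_nonneg _)

theorem stronglyMeasurable_integral_add (ρ : Measure ℝ) [SFinite ρ] (hf : Measurable f) :
    StronglyMeasurable fun y => ∫ x, f (y + x) ∂ρ :=
  StronglyMeasurable.integral_prod_right (f := fun y x => f (y + x))
    (hf.comp measurable_add).stronglyMeasurable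

theorem abs_integral_le_mul_measureReal_univ (ρ : Measure ℝ) [IsFiniteMeasure ρ]
    (hfA : ∀ x, |f x| ≤ A) : |∫ x, f x ∂ρ| ≤ A * ρ.real univ :=
  (Real.norm_eq_abs _).symm.trans_le <|
    norm_integral_le_of_norm_le_const (Eventually.of_forall hfA)

theorem integrable_integral_add (M ρ : Measure ℝ) [IsFiniteMeasure M] [IsFiniteMeasure ρ]
    (hf : Measurable f) (hfA : ∀ x, |f x| ≤ A) : Integrable (fun y => ∫ x, f (y + x) ∂ρ) M :=
  Integrable.of_bound (stronglyMeasurable_integral_add ρ hf).aestronglyMeasurable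
    (A * ρ.real univ) <|
    Eventually.of_forall fun y => abs_integral_le_mul_measureReal_univ ρ fun x => hfA (y + x)

theorem abs_integral_conv_compoundPoisson_sub_le [IsProbabilityMeasure M] [IsFiniteMeasure ρ]
    (hf : Measurable f) (hfA : ∀ x, |f x| ≤ A) :
    |∫ x, f x ∂(M ∗ compoundPoisson ρ) - ∫ y, ∫ x, f (y + x) ∂ρ ∂M|
      ≤ ∫ y, |f y| ∂M + 2 * A * ρ.real univ ^ 2 := by
  have hint (m : Measure ℝ) [IsFiniteMeasure m] : Integrable f m :=
    Integrable.of_bound hf.aestronglyMeasurable A (Eventually.of_forall hfA)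
  rw [integral_conv (hint _), ← integral_sub (integrable_integral_add M _ hf hfA)
    (integrable_integral_add M ρ hf hfA)]
  calc |∫ y, (∫ x, f (y + x) ∂(compoundPoisson ρ) - ∫ x, f (y + x) ∂ρ) ∂M|
      ≤ ∫ y, (|f y| + 2 * A * ρ.real univ ^ 2) ∂M :=
        abs_integral_le_of_abs_le ((hint M).abs.add (integrable_const _)) fun y => by
          simpa using abs_integral_compoundPoisson_sub_le ρ
            (hf.comp (measurable_const_add y)) fun x => hfA (y + x)
    _ = ∫ y, |f y| ∂M + 2 * A * ρ.real univ ^ 2 := by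
        rw [integral_add (hint M).abs (integrable_const _)]; simp

theorem abs_integral_integral_add_mul_sub_le [IsFiniteMeasure M] (hf : Integrable f)
    (ha : Continuous a) (hc : HasCompactSupport a) (haB : ∀ z, |∫ y, a (z - y) ∂M - a z| ≤ B) :
    |∫ y, (∫ x, f (y + x) * a x) ∂M - ∫ x, f x * a x| ≤ B * ∫ x, |f x| := by
  obtain ⟨C, hC⟩ := hc.exists_bound_of_continuous ha
  have hshift (y : ℝ) : ∫ x, f (y + x) * a x = ∫ z, f z * a (z - y) := by
    rw [← integral_add_left_eq_self (fun z => f z * a (z - y)) y]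
    simp only [add_sub_cancel_left]
  have hprod : Integrable (fun p : ℝ × ℝ => f p.2 * a (p.2 - p.1)) (M.prod volume) :=
    (hf.comp_snd M).mul_bdd (Continuous.aestronglyMeasurable (by fun_prop))
      (Eventually.of_forall fun p => hC _)
  have hleft : Integrable fun z => f z * ∫ y, a (z - y) ∂M := by
    simpa only [integral_const_mul] using hprod.integral_prod_right
  simp only [hshift]
  rw [integral_integral_swap hprod]
  simp only [integral_const_mul]
  rw [← integral_sub hleft (hf.mul_bdd ha.aestronglyMeasurable (Eventually.of_forall hC)),
    ← integral_const_mul]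
  refine abs_integral_le_of_abs_le (hf.abs.const_mul B) fun z => ?_
  rw [← mul_sub, abs_mul, mul_comm]
  exact mul_le_mul_of_nonneg_right (haB z) (abs_nonneg _)

/-- On the set `S`, the measure `ν` has density `a` up to an error of total mass `D`, tested
against bounded functions that vanish off `S`. -/
def HasDensityUpTo (S : Set ℝ) (ν : Measure ℝ) (a : ℝ → ℝ) (D : ℝ) : Prop :=
  ∀ (g : ℝ → ℝ) (A : ℝ), Measurable g → (∀ x, |g x| ≤ A) → (∀ x ∉ S, g x = 0) →
    |∫ x, g x ∂ν - ∫ x, g x * a x| ≤ A * D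

/-- The closed annulus `r ≤ |x| ≤ R` of the line. -/
def annulus (r R : ℝ) : Set ℝ := {x | r ≤ |x| ∧ |x| ≤ R}

theorem annulus_subset_annulus {r' R' : ℝ} (hr : r' ≤ r) (hR : R ≤ R') :
    annulus r R ⊆ annulus r' R' :=
  fun _ hx => ⟨hr.trans hx.1, hx.2.trans hR⟩

theorem HasDensityUpTo.abs_integral_add_sub_le [IsFiniteMeasure (ν.restrict {x | r < |x|})]
    (h : HasDensityUpTo (annulus (2 * r) (R + 2 * r)) ν a D) (hr : 0 < r) (ha : Integrable a)
    (hf : Measurable f) (hfA : ∀ x, |f x| ≤ A) (hfS : ∀ x ∉ annulus (4 * r) R, f x = 0) (y : ℝ) :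
    |∫ x in {x | r < |x|}, f (y + x) ∂ν - ∫ x, f (y + x) * a x|
      ≤ A * D + {y : ℝ | 2 * r ≤ |y|}.indicator
        (fun _ => A * (ν.real {x | r < |x|} + ∫ x, |a x|)) y := by
  have hA : 0 ≤ A := (abs_nonneg _).trans (hfA 0)
  have hD : 0 ≤ A * D := by simpa using h 0 A measurable_const (by simpa using hA) (by simp)
  by_cases hy : 2 * r ≤ |y|
  · have hν := abs_integral_le_mul_measureReal_univ (ν.restrict {x | r < |x|})
      fun x => hfA (y + x)
    have hdens := abs_integral_mul_le_mul_integral_abs ha fun x => hfA (y + x)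
    rw [measureReal_restrict_apply_univ] at hν
    simp only [mem_ofPred_eq, hy, indicator_of_mem]
    linarith [abs_sub (∫ x in {x | r < |x|}, f (y + x) ∂ν) (∫ x, f (y + x) * a x)]
  · have hinner {x : ℝ} (hx : x ∉ {x | r < |x|}) : x ∉ annulus (2 * r) (R + 2 * r) :=
      fun hxS => hx (show r < |x| by linarith [hxS.1])
    have hvanish (x : ℝ) (hx : x ∉ annulus (2 * r) (R + 2 * r)) : f (y + x) = 0 := by
      refine hfS _ fun hxy => hx ⟨?_, ?_⟩
      · linarith [abs_add_le y x, hxy.1]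
      · have := abs_sub (y + x) y
        rw [add_sub_cancel_left] at this
        linarith [hxy.2]
    rw [setIntegral_eq_integral_of_forall_compl_eq_zero fun x hx => hvanish x (hinner hx)]
    simpa [hy] using h _ A (hf.comp (measurable_const_add y)) (fun x => hfA (y + x)) hvanish

theorem integrable_of_abs_le_of_eq_zero {m : Measure ℝ} {S : Set ℝ} (hS : m S ≠ ∞)
    (hf : Measurable f) (hfA : ∀ x, |f x| ≤ A) (hfS : ∀ x ∉ S, f x = 0) : Integrable f m :=
  (integrableOn_iff_integrable_of_support_subset fun x hx =>
    by_contra fun hxS => hx (hfS x hxS)).1 <|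
    Measure.integrableOn_of_bounded hS hf.aestronglyMeasurable (Eventually.of_forall hfA)

theorem integral_abs_le_mul_measureReal {m : Measure ℝ} {S : Set ℝ} (hS : m S ≠ ∞)
    (hfA : ∀ x, |f x| ≤ A) (hfS : ∀ x ∉ S, f x = 0) : ∫ x, |f x| ∂m ≤ A * m.real S := by
  rw [← setIntegral_eq_integral_of_forall_compl_eq_zero (s := S) fun x hx => by simp [hfS x hx]]
  have := isFiniteMeasure_restrict.2 hS
  have hle := abs_integral_le_mul_measureReal_univ (f := fun x => |f x|) (m.restrict S) fun x => by
    simpa using hfA x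
  rw [measureReal_restrict_apply_univ] at hle
  exact (le_abs_self _).trans hle

theorem HasDensityUpTo.abs_integral_integral_add_sub_le [IsProbabilityMeasure M]
    [IsFiniteMeasure (ν.restrict {x | r < |x|})]
    (h : HasDensityUpTo (annulus (2 * r) (R + 2 * r)) ν a D) (hr : 0 < r) (ha : Continuous a)
    (hc : HasCompactSupport a)
    (hf : Measurable f) (hfA : ∀ x, |f x| ≤ A) (hfS : ∀ x ∉ annulus (4 * r) R, f x = 0) :
    |∫ y, ∫ x in {x | r < |x|}, f (y + x) ∂ν ∂M - ∫ y, (∫ x, f (y + x) * a x) ∂M|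
      ≤ A * D + A * (ν.real {x | r < |x|} + ∫ x, |a x|) * M.real {y | 2 * r ≤ |y|} := by
  have hai : Integrable a := ha.integrable_of_hasCompactSupport hc
  have hmeas : MeasurableSet {y : ℝ | 2 * r ≤ |y|} :=
    measurableSet_le measurable_const measurable_norm
  have hind := (integrable_const (μ := M) (A * (ν.real {x | r < |x|} + ∫ x, |a x|))).indicator hmeas
  have hfa : Integrable (fun y => ∫ x, f (y + x) * a x) M := by
    have hm : StronglyMeasurable fun y => ∫ x, f (y + x) * a x :=
      StronglyMeasurable.integral_prod_right (f := fun y x => f (y + x) * a x)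
        ((hf.comp measurable_add).mul (ha.measurable.comp measurable_snd)).stronglyMeasurable
    refine Integrable.of_bound hm.aestronglyMeasurable (A * ∫ x, |a x|) <|
      Eventually.of_forall fun y => abs_integral_mul_le_mul_integral_abs hai fun x => hfA (y + x)
  have hfν := integrable_integral_add M (ν.restrict {x | r < |x|}) hf hfA
  rw [← integral_sub hfν hfa]
  refine (abs_integral_le_of_abs_le ((integrable_const _).add hind) <|
      h.abs_integral_add_sub_le hr hai hf hfA hfS).trans_eq ?_
  rw [integral_add' (integrable_const _) hind, integral_indicator_const _ hmeas]
  simp [mul_comm]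

theorem HasDensityUpTo.abs_integral_conv_sub_le [IsProbabilityMeasure M]
    [IsFiniteMeasure (ν.restrict {x | r < |x|})]
    (h : HasDensityUpTo (annulus (2 * r) (R + 2 * r)) ν a D) (hr : 0 < r) (hR : 0 ≤ R)
    (ha : Continuous a) (hc : HasCompactSupport a)
    (haB : ∀ z, |∫ y, a (z - y) ∂M - a z| ≤ B) (hf : Measurable f) (hfA : ∀ x, |f x| ≤ A)
    (hfS : ∀ x ∉ annulus (4 * r) R, f x = 0) :
    |∫ x, f x ∂(M ∗ compoundPoisson (ν.restrict {x | r < |x|})) - ∫ x, f x ∂ν|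
      ≤ A * ((1 + ν.real {x | r < |x|} + ∫ x, |a x|) * M.real {y | 2 * r ≤ |y|}
        + 2 * ν.real {x | r < |x|} ^ 2 + 2 * D + 2 * R * B) := by
  have hfM : ∫ y, |f y| ∂M ≤ A * M.real {y | 2 * r ≤ |y|} :=
    integral_abs_le_mul_measureReal (measure_ne_top _ _) hfA fun x hx =>
      hfS x fun hxS => hx (show 2 * r ≤ |x| by linarith [hxS.1])
  have hIcc {x : ℝ} (hx : x ∉ Icc (-R) R) : f x = 0 := hfS x fun hxS => hx (abs_le.1 hxS.2)
  have hfvol : ∫ x, |f x| ≤ A * (2 * R) := by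
    simpa [hR, two_mul] using
      integral_abs_le_mul_measureReal (m := volume) measure_Icc_lt_top.ne hfA fun _ => hIcc
  have hB : 0 ≤ B := (abs_nonneg _).trans (haB 0)
  have hpoisson := abs_integral_conv_compoundPoisson_sub_le (M := M)
    (ρ := ν.restrict {x | r < |x|}) hf hfA
  have hjump := h.abs_integral_integral_add_sub_le (M := M) hr ha hc hf hfA hfS
  have hsmooth := abs_integral_integral_add_mul_sub_le (M := M) (integrable_of_abs_le_of_eq_zero
    measure_Icc_lt_top.ne hf hfA fun _ => hIcc) ha hc haB
  have hdens := h f A hf hfA fun x hx => hfS x fun hxS =>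
    hx (annulus_subset_annulus (by linarith) (by linarith) hxS)
  rw [abs_le] at hpoisson hjump hsmooth hdens ⊢
  rw [measureReal_restrict_apply_univ] at hpoisson
  have hBf := mul_le_mul_of_nonneg_left hfvol hB
  constructor <;> linarith

theorem mul_add_le_mul_mul_add {c l s : ℝ} (hc : 0 ≤ c) (hl : 0 ≤ l) (hs : 0 ≤ s) :
    l * (c * l + s) ≤ (c + 1) * (l * (l + s)) := by
  nlinarith [mul_nonneg hl hl, mul_nonneg hc (mul_nonneg hl hs)]

theorem exists_eq_conv_compoundPoisson_forall_le (hr : 0 < r) (ha : ContDiff ℝ (⊤ : ℕ∞) a)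
    (hc : HasCompactSupport a) {c : ℝ} (hc0 : 0 ≤ c) :
    ∃ C : ℝ, 0 ≤ C ∧ ∀ (μ ν : Measure ℝ) [IsProbabilityMeasure μ] [SFinite ν] (β : ℝ) (s : ℝ≥0)
      (l : ℝ), HasLevyTriplet μ β s ν → 0 ≤ l → jumpActivity β ν ≤ c * l →
        ∃ M : Measure ℝ, IsProbabilityMeasure M ∧
          μ = M ∗ compoundPoisson (ν.restrict {x | r < |x|}) ∧
          ν.real {x | r < |x|} ≤ C * l ∧
          M.real {y | 2 * r ≤ |y|}
            ≤ (gaussianReal 0 s).real {x | r ≤ |x|} + C * (l * (l + s)) ∧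
          ∀ z, |∫ y, l * a (z - y) ∂M - l * a z| ≤ C * (l * (l + s)) := by
  obtain ⟨K, hK, hsmooth⟩ := exists_abs_integral_comp_sub_sub_le ha hc
  obtain ⟨K', hK', htail⟩ := exists_measureReal_le_abs_le hr
  set m := max 1 r⁻¹
  set e := m * c
  have hm : 0 ≤ m := zero_le_one.trans (le_max_left _ _)
  have he : 0 ≤ e := mul_nonneg hm hc0
  refine ⟨r⁻¹ * e + K' * (e * (e + 1)) + K * (e + 1), by positivity,
    fun μ ν _ _ β s l h hl hact => ?_⟩
  obtain ⟨M, hM, hMt, hμ⟩ := h.exists_eq_conv_compoundPoisson hr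
  have hactM : jumpActivity _ (ν.restrict {x | |x| ≤ r}) ≤ e * l :=
    (jumpActivity_restrict_le h.integrable_sqMinAbs hr β).trans <| by
      rw [mul_assoc]; gcongr
  have hT := mul_add_le_mul_mul_add he hl s.coe_nonneg
  refine ⟨M, hM, hμ, ?_, ?_, fun z => ?_⟩
  · have := (mul_measureReal_lt_abs_le h.integrable_sqMinAbs hr).trans
      (mul_le_mul_of_nonneg_left ((le_add_of_nonneg_left (abs_nonneg β)).trans hact) hm)
    rw [← mul_assoc, ← le_inv_mul_iff₀ hr, ← mul_assoc] at this
    refine this.trans (mul_le_mul_of_nonneg_right ?_ hl)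
    rw [add_assoc]
    exact le_add_of_nonneg_right (by positivity)
  · have hsmall : ∀ᵐ x ∂(ν.restrict {x | |x| ≤ r}), |x| ≤ r :=
      ae_restrict_mem (measurableSet_le measurable_norm measurable_const)
    refine (htail M _ _ s hMt hsmall).trans (add_le_add_right ?_ _)
    calc K' * (jumpActivity _ _ * (jumpActivity _ _ + s)) ≤ K' * (e * l * (e * l + s)) := by
          gcongr
          exact add_nonneg (jumpActivity_nonneg _ _) s.coe_nonneg
      _ = K' * e * (l * (e * l + s)) := by ring
      _ ≤ K' * e * ((e + 1) * (l * (l + s))) := by gcongr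
      _ = K' * (e * (e + 1)) * (l * (l + s)) := by ring
      _ ≤ _ := by gcongr; linarith [show 0 ≤ r⁻¹ * e + K * (e + 1) by positivity]
  · rw [integral_const_mul, ← mul_sub, abs_mul, abs_of_nonneg hl]
    calc l * |∫ y, a (z - y) ∂M - a z| ≤ l * (K * (e * l + s)) := by
          gcongr
          exact (hsmooth M _ _ s hMt z).trans (by gcongr)
      _ = K * (l * (e * l + s)) := by ring
      _ ≤ K * ((e + 1) * (l * (l + s))) := by gcongr
      _ = K * (e + 1) * (l * (l + s)) := by ring
      _ ≤ _ := by gcongr; linarith [show 0 ≤ r⁻¹ * e + K' * (e * (e + 1)) by positivity]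

theorem exists_abs_integral_sub_le_of_hasDensityUpTo (hr : 0 < r) (hR : 0 ≤ R)
    (ha : ContDiff ℝ (⊤ : ℕ∞) a) (hc : HasCompactSupport a) {c : ℝ} (hc0 : 0 ≤ c) :
    ∃ C : ℝ, 0 ≤ C ∧ ∀ (μ ν : Measure ℝ) [IsProbabilityMeasure μ] [SFinite ν] (β : ℝ) (s : ℝ≥0)
      (l D : ℝ) (f : ℝ → ℝ) (A : ℝ), HasLevyTriplet μ β s ν → 0 ≤ l → jumpActivity β ν ≤ c * l →
        l ≤ 1 → HasDensityUpTo (annulus (2 * r) (R + 2 * r)) ν (fun x => l * a x) D →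
        Measurable f → (∀ x, |f x| ≤ A) → (∀ x ∉ annulus (4 * r) R, f x = 0) →
        |∫ x, f x ∂μ - ∫ x, f x ∂ν|
          ≤ A * (C * (l * (l + s) + (gaussianReal 0 s).real {x | r ≤ |x|} + D)) := by
  obtain ⟨C, hC, htrunc⟩ := exists_eq_conv_compoundPoisson_forall_le hr ha hc hc0
  set I := ∫ x, |a x|
  have : 0 ≤ I := integral_nonneg fun x => abs_nonneg (a x)
  refine ⟨(1 + C + I) * (1 + C) + 2 * C ^ 2 + 2 + 2 * R * C, by positivity,
    fun μ ν _ _ β s l D f A h hl hact hl1 hD hf hfA hfS => ?_⟩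
  have := isFiniteMeasure_restrict_lt_abs h.integrable_sqMinAbs hr
  obtain ⟨M, hM, rfl, hmass, htail, hsmooth⟩ := htrunc μ ν β s l h hl hact
  have hA : 0 ≤ A := (abs_nonneg _).trans (hfA 0)
  have hD0 : 0 ≤ D := by simpa using hD 0 1 measurable_const (by simp) (by simp)
  have hla : ∫ x, |l * a x| = l * I := by
    simp only [abs_mul, abs_of_nonneg hl, integral_const_mul, I]
  refine (hD.abs_integral_conv_sub_le hr hR (by have := ha.continuous; fun_prop) hc.mul_left
    hsmooth hf hfA hfS).trans (mul_le_mul_of_nonneg_left ?_ hA)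
  rw [hla]
  set T := l * (l + s)
  set N := (gaussianReal 0 s).real {x | r ≤ |x|}
  have hT : l ^ 2 ≤ T := by nlinarith [mul_nonneg hl s.coe_nonneg]
  have : 0 ≤ N := measureReal_nonneg
  calc (1 + ν.real {x | r < |x|} + l * I) * M.real {y | 2 * r ≤ |y|}
        + 2 * ν.real {x | r < |x|} ^ 2 + 2 * D + 2 * R * (C * T)
      ≤ (1 + C * l + l * I) * (N + C * T) + 2 * (C * l) ^ 2 + 2 * D + 2 * R * (C * T) := by gcongr
    _ ≤ (1 + C * 1 + 1 * I) * (N + C * T) + 2 * (C ^ 2 * T) + 2 * D + 2 * R * (C * T) := by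
        rw [mul_pow]; gcongr
    _ ≤ ((1 + C + I) * (1 + C) + 2 * C ^ 2 + 2 + 2 * R * C) * (T + N + D) := by
        have : 0 ≤ ((1 + C + I) * C + 2 * C ^ 2 + 2 + 2 * R * C) * N
          + ((1 + C + I) * (1 + C) + 2 * C ^ 2 + 2 * R * C) * D + (3 + C + I) * T := by positivity
        linarith

end CutOff

/-! ### Tilted stable Lévy measures -/

section LevyMeasure

variable {Y Cp Cm : ℝ} {q : ℝ → ℝ}

theorem measurable_levyDensity (hq : Measurable q) : Measurable (levyDensity Y Cp Cm q) := by
  have hw : Measurable fun x : ℝ => if 0 < x then Cp else if x < 0 then Cm else 0 :=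
    measurable_const.ite measurableSet_Ioi (measurable_const.ite measurableSet_Iio measurable_const)
  unfold levyDensity
  fun_prop

theorem levyDensity_nonneg (hCp : 0 ≤ Cp) (hCm : 0 ≤ Cm) (hq : ∀ x, 0 ≤ q x) (x : ℝ) :
    0 ≤ levyDensity Y Cp Cm q x := by
  refine mul_nonneg (mul_nonneg ?_ (hq x)) (by positivity)
  split_ifs <;> first | assumption | rfl

theorem abs_levyDensity_le (hCp : 0 ≤ Cp) (hCm : 0 ≤ Cm) (q : ℝ → ℝ) (x : ℝ) :
    |levyDensity Y Cp Cm q x| ≤ (Cp + Cm) * (|q x| * |x| ^ (-1 - Y)) := by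
  have hw : |if 0 < x then Cp else if x < 0 then Cm else 0| ≤ Cp + Cm := by
    rw [abs_le]
    constructor <;> split_ifs <;> linarith
  rw [levyDensity, mul_assoc, abs_mul, abs_mul, abs_of_nonneg (Real.rpow_nonneg (abs_nonneg x) _)]
  gcongr

theorem levyDensity_sub (Y Cp Cm : ℝ) (p q : ℝ → ℝ) (x : ℝ) :
    levyDensity Y Cp Cm p x - levyDensity Y Cp Cm q x = levyDensity Y Cp Cm (p - q) x := by
  simp only [levyDensity, Pi.sub_apply]
  ring

theorem levyDensity_mul_left {c : ℝ} (hc : 0 < c) (Y Cp Cm : ℝ) (q : ℝ → ℝ) (x : ℝ) :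
    levyDensity Y Cp Cm q (c * x)
      = c ^ (-1 - Y) * levyDensity Y Cp Cm (fun x => q (c * x)) x := by
  have hneg : c * x < 0 ↔ x < 0 := smul_neg_iff_of_pos_left hc
  simp only [levyDensity, mul_pos_iff_of_pos_left hc, hneg, abs_mul, abs_of_pos hc,
    Real.mul_rpow hc.le (abs_nonneg x)]
  ring

theorem contDiffAt_levyDensity_one (Y Cp Cm : ℝ) {x : ℝ} (hx : x ≠ 0) :
    ContDiffAt ℝ (⊤ : ℕ∞) (levyDensity Y Cp Cm 1) x := by
  have hpow (C : ℝ) : ContDiffAt ℝ (⊤ : ℕ∞) (fun x : ℝ => C * |x| ^ (-1 - Y)) x :=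
    contDiffAt_const.mul ((contDiffAt_abs hx).rpow_const_of_ne (abs_ne_zero.2 hx))
  rcases hx.lt_or_gt with hneg | hpos
  · refine (hpow Cm).congr_of_eventuallyEq ?_
    filter_upwards [Iio_mem_nhds hneg] with y hy
    simp [levyDensity, not_lt.2 (mem_Iio.1 hy).le, mem_Iio.1 hy]
  · refine (hpow Cp).congr_of_eventuallyEq ?_
    filter_upwards [Ioi_mem_nhds hpos] with y hy
    simp [levyDensity, mem_Ioi.1 hy]

theorem exists_contDiff_eqOn_levyDensity_one (Y Cp Cm : ℝ) {r R : ℝ} (hr : 0 < r) (hR : 0 < R) :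
    ∃ a : ℝ → ℝ, ContDiff ℝ (⊤ : ℕ∞) a ∧ HasCompactSupport a ∧
      EqOn a (levyDensity Y Cp Cm 1) (annulus r R) := by
  let φ : ContDiffBump (0 : ℝ) := ⟨r / 2, r, by positivity, by linarith⟩
  let θ : ContDiffBump (0 : ℝ) := ⟨R, R + 1, hR, by linarith⟩
  refine ⟨fun x => levyDensity Y Cp Cm 1 x * (1 - φ x) * θ x, contDiff_iff_contDiffAt.2 fun x => ?_,
    θ.hasCompactSupport.mul_left, fun x hx => ?_⟩
  · rcases eq_or_ne x 0 with rfl | hx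
    · refine contDiffAt_const (c := (0 : ℝ)) |>.congr_of_eventuallyEq ?_
      filter_upwards [φ.eventuallyEq_one] with y hy
      simp [hy]
    · exact ((contDiffAt_levyDensity_one Y Cp Cm hx).mul (contDiffAt_const.sub φ.contDiffAt)).mul
        θ.contDiffAt
  · have hφ : φ x = 0 := φ.zero_of_le_dist (by simpa using hx.1)
    have hθ : θ x = 1 := θ.one_of_mem_closedBall (by simpa using hx.2)
    simp only [hφ, hθ, sub_zero, mul_one]

instance sFinite_levyMeasure (Y Cp Cm : ℝ) (q : ℝ → ℝ) : SFinite (levyMeasure Y Cp Cm q) := by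
  unfold levyMeasure
  infer_instance

theorem integral_levyMeasure (hCp : 0 ≤ Cp) (hCm : 0 ≤ Cm) (hqm : Measurable q)
    (hq : ∀ x, 0 ≤ q x) (f : ℝ → ℝ) :
    ∫ x, f x ∂(levyMeasure Y Cp Cm q) = ∫ x, levyDensity Y Cp Cm q x * f x := by
  rw [levyMeasure, integral_withDensity_eq_integral_toReal_smul
    (measurable_levyDensity hqm).ennreal_ofReal (ae_of_all _ fun _ => ENNReal.ofReal_lt_top)]
  simp only [ENNReal.toReal_ofReal (levyDensity_nonneg hCp hCm hq _), smul_eq_mul]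

theorem integrable_levyMeasure_iff (hCp : 0 ≤ Cp) (hCm : 0 ≤ Cm) (hqm : Measurable q)
    (hq : ∀ x, 0 ≤ q x) {f : ℝ → ℝ} :
    Integrable f (levyMeasure Y Cp Cm q)
      ↔ Integrable fun x => levyDensity Y Cp Cm q x * f x := by
  rw [levyMeasure, integrable_withDensity_iff_integrable_smul'
    (measurable_levyDensity hqm).ennreal_ofReal (ae_of_all _ fun _ => ENNReal.ofReal_lt_top)]
  simp only [ENNReal.toReal_ofReal (levyDensity_nonneg hCp hCm hq _), smul_eq_mul]

theorem map_mul_levyMeasure (hY : 0 < Y) {c : ℝ} (hc : 0 < c) (hqm : Measurable q) :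
    (levyMeasure Y Cp Cm q).map (c⁻¹ * ·)
      = ENNReal.ofReal (c ^ (-Y)) • levyMeasure Y Cp Cm fun x => q (c * x) := by
  set ρ : ℝ → ℝ≥0∞ := fun x => ENNReal.ofReal (levyDensity Y Cp Cm q x) with hρ
  have hρm : Measurable ρ := (measurable_levyDensity hqm).ennreal_ofReal
  have hm : Measurable (c⁻¹ * · : ℝ → ℝ) := by fun_prop
  refine Measure.ext fun S hS => ?_
  calc (levyMeasure Y Cp Cm q).map (c⁻¹ * ·) S = ∫⁻ x in (c⁻¹ * ·) ⁻¹' S, ρ (c * (c⁻¹ * x)) := by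
        rw [Measure.map_apply hm hS, levyMeasure, withDensity_apply _ (hm hS)]
        simp only [mul_inv_cancel_left₀ hc.ne', hρ]
    _ = ∫⁻ y in S, ρ (c * y) ∂(volume.map (c⁻¹ * ·)) :=
        (setLIntegral_map (f := fun y => ρ (c * y)) hS (by fun_prop) hm).symm
    _ = ENNReal.ofReal c * ∫⁻ y in S, ρ (c * y) := by
        rw [Real.map_volume_mul_left (inv_ne_zero hc.ne'), inv_inv, abs_of_pos hc,
          Measure.restrict_smul, lintegral_smul_measure, smul_eq_mul]
    _ = _ := by
        simp only [hρ, levyDensity_mul_left hc, ENNReal.ofReal_mul (Real.rpow_nonneg hc.le _)]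
        rw [lintegral_const_mul' _ _ ENNReal.ofReal_ne_top, ← mul_assoc, ← ENNReal.ofReal_mul hc.le,
          Measure.smul_apply, levyMeasure, withDensity_apply _ hS, smul_eq_mul,
          ← Real.rpow_one_add' hc.le (by linarith)]
        ring_nf

theorem integrable_sqMinAbs_mul_rpow (hY1 : 1 < Y) (hY2 : Y < 2) :
    Integrable fun x : ℝ => sqMinAbs x * |x| ^ (-1 - Y) := by
  have hradial : IntegrableOn (fun x : ℝ => sqMinAbs x * x ^ (-1 - Y)) (Ioi 0) := by
    rw [← Ioc_union_Ioi_eq_Ioi zero_le_one]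
    refine IntegrableOn.union ?_ ?_
    · refine ((intervalIntegrable_iff_integrableOn_Ioc_of_le zero_le_one).1
        (intervalIntegral.intervalIntegrable_rpow' (r := 1 - Y) (by linarith))).congr_fun
        (fun x hx => ?_) measurableSet_Ioc
      have hsq : x ^ 2 ≤ |x| := by rw [abs_of_pos hx.1]; nlinarith [hx.1, hx.2]
      change x ^ (1 - Y) = sqMinAbs x * x ^ (-1 - Y)
      rw [sqMinAbs, min_eq_left hsq, ← Real.rpow_natCast x 2, ← Real.rpow_add hx.1]
      norm_num [add_sub_assoc']
    · refine (integrableOn_Ioi_rpow_of_lt (neg_lt_neg hY1) one_pos).congr_fun (fun x hx => ?_)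
        measurableSet_Ioi
      have hx0 : 0 < x := one_pos.trans hx
      have hsq : |x| ≤ x ^ 2 := by rw [abs_of_pos hx0]; nlinarith [mem_Ioi.1 hx]
      change x ^ (-Y) = sqMinAbs x * x ^ (-1 - Y)
      rw [sqMinAbs, min_eq_right hsq, abs_of_pos hx0, ← Real.rpow_one_add' hx0.le (by linarith)]
      ring_nf
  refine ((integrable_fun_norm_addHaar (volume : Measure ℝ)
    (f := fun x => sqMinAbs x * x ^ (-1 - Y))).2 (by simpa using hradial)).congr
    (ae_of_all _ fun x => ?_)
  simp only [sqMinAbs, Real.norm_eq_abs, sq_abs, abs_abs]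

theorem abs_levyDensity_mul_sqMinAbs_le (hCp : 0 ≤ Cp) (hCm : 0 ≤ Cm) {Q x : ℝ}
    (hQ : |q x| ≤ Q) : |levyDensity Y Cp Cm q x * sqMinAbs x|
      ≤ (Cp + Cm) * Q * (sqMinAbs x * |x| ^ (-1 - Y)) := by
  rw [abs_mul, abs_of_nonneg (sqMinAbs_nonneg x)]
  calc |levyDensity Y Cp Cm q x| * sqMinAbs x ≤ (Cp + Cm) * (Q * |x| ^ (-1 - Y)) * sqMinAbs x := by
        refine mul_le_mul_of_nonneg_right ?_ (sqMinAbs_nonneg x)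
        exact (abs_levyDensity_le hCp hCm q x).trans (by gcongr)
    _ = _ := by ring

theorem integrable_sqMinAbs_levyMeasure (hY1 : 1 < Y) (hY2 : Y < 2) (hCp : 0 ≤ Cp) (hCm : 0 ≤ Cm)
    (hqm : Measurable q) (hq : ∀ x, 0 ≤ q x) {Q : ℝ} (hQ : ∀ x, q x ≤ Q) :
    Integrable sqMinAbs (levyMeasure Y Cp Cm q) :=
  (integrable_levyMeasure_iff hCp hCm hqm hq).2 <|
    ((integrable_sqMinAbs_mul_rpow hY1 hY2).const_mul ((Cp + Cm) * Q)).mono'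
      ((measurable_levyDensity hqm).mul continuous_sqMinAbs.measurable).aestronglyMeasurable
      (ae_of_all _ fun x => abs_levyDensity_mul_sqMinAbs_le hCp hCm <|
        (abs_of_nonneg (hq x)).trans_le (hQ x))

theorem integral_sqMinAbs_levyMeasure_le (hY1 : 1 < Y) (hY2 : Y < 2) (hCp : 0 ≤ Cp)
    (hCm : 0 ≤ Cm) (hqm : Measurable q) (hq : ∀ x, 0 ≤ q x) {Q : ℝ} (hQ : ∀ x, q x ≤ Q) :
    ∫ x, sqMinAbs x ∂(levyMeasure Y Cp Cm q)
      ≤ (Cp + Cm) * Q * ∫ x : ℝ, sqMinAbs x * |x| ^ (-1 - Y) := by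
  rw [integral_levyMeasure hCp hCm hqm hq, ← integral_const_mul]
  exact (le_abs_self _).trans <| abs_integral_le_of_abs_le
    ((integrable_sqMinAbs_mul_rpow hY1 hY2).const_mul _) fun x =>
      abs_levyDensity_mul_sqMinAbs_le hCp hCm ((abs_of_nonneg (hq x)).trans_le (hQ x))

end LevyMeasure

section TiltDefect

variable {Y Cp Cm Q : ℝ} {q : ℝ → ℝ}

/-- The distance from the tilt `q` to the constant tilt `1` on `[-2, 2]`, weighted by the stable
Lévy density and by `sqMinAbs`. It is what a tilted stable Lévy measure loses when it is replaced
by the stable one. -/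
def tiltDefect (Y : ℝ) (q : ℝ → ℝ) : ℝ :=
  ∫ x in Icc (-2) 2, |q x - 1| * (sqMinAbs x * |x| ^ (-1 - Y))

theorem tiltDefect_nonneg (Y : ℝ) (q : ℝ → ℝ) : 0 ≤ tiltDefect Y q :=
  integral_nonneg fun x =>
    mul_nonneg (abs_nonneg _) (mul_nonneg (sqMinAbs_nonneg x) (by positivity))

theorem abs_integral_levyMeasure_sub_le (hY1 : 1 < Y) (hY2 : Y < 2) (hCp : 0 ≤ Cp) (hCm : 0 ≤ Cm)
    (hqm : Measurable q) (hq : ∀ x, 0 ≤ q x) (hQ : ∀ x, q x ≤ Q) {φ : ℝ → ℝ} {B : ℝ}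
    (hφ : Measurable φ) (hB : ∀ x, |φ x| ≤ B * sqMinAbs x) (hφ0 : ∀ x ∉ Icc (-2 : ℝ) 2, φ x = 0) :
    |∫ x, φ x ∂(levyMeasure Y Cp Cm q) - ∫ x, φ x ∂(levyMeasure Y Cp Cm 1)|
      ≤ B * ((Cp + Cm) * tiltDefect Y q) := by
  have hone : ∀ x, 0 ≤ (1 : ℝ → ℝ) x := fun _ => zero_le_one
  have hint {p : ℝ → ℝ} {P : ℝ} (hpm : Measurable p) (hp : ∀ x, 0 ≤ p x) (hP : ∀ x, p x ≤ P) :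
      Integrable fun x => levyDensity Y Cp Cm p x * φ x :=
    (integrable_levyMeasure_iff hCp hCm hpm hp).1 <|
      ((integrable_sqMinAbs_levyMeasure hY1 hY2 hCp hCm hpm hp hP).const_mul B).mono'
        hφ.aestronglyMeasurable (ae_of_all _ hB)
  have hdefect : Integrable fun x => |q x - 1| * (sqMinAbs x * |x| ^ (-1 - Y)) := by
    refine (integrable_sqMinAbs_mul_rpow hY1 hY2).bdd_mul (c := Q + 1) (by fun_prop)
      (ae_of_all _ fun x => ?_)
    rw [Real.norm_eq_abs, abs_abs, abs_le]
    constructor <;> linarith [hq x, hQ x]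
  rw [integral_levyMeasure hCp hCm hqm hq, integral_levyMeasure hCp hCm measurable_one hone,
    ← integral_sub (hint hqm hq hQ) (hint measurable_one hone fun _ => le_rfl), tiltDefect,
    ← integral_indicator measurableSet_Icc, ← mul_assoc, ← integral_const_mul]
  refine abs_integral_le_of_abs_le ((hdefect.indicator measurableSet_Icc).const_mul _) fun x => ?_
  by_cases hx : x ∈ Icc (-2 : ℝ) 2
  · rw [← sub_mul, levyDensity_sub, abs_mul, indicator_of_mem hx]
    calc _ ≤ (Cp + Cm) * (|(q - 1) x| * |x| ^ (-1 - Y)) * (B * sqMinAbs x) :=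
          mul_le_mul (abs_levyDensity_le hCp hCm _ x) (hB x) (abs_nonneg _) (by positivity)
      _ = B * (Cp + Cm) * (|q x - 1| * (sqMinAbs x * |x| ^ (-1 - Y))) := by
          rw [Pi.sub_apply, Pi.one_apply]
          ring
  · simp [hφ0 x hx, hx]

theorem hasDensityUpTo_smul_levyMeasure (hY1 : 1 < Y) (hY2 : Y < 2) (hCp : 0 ≤ Cp) (hCm : 0 ≤ Cm)
    (hqm : Measurable q) (hq : ∀ x, 0 ≤ q x) (hQ : ∀ x, q x ≤ Q) {r R l : ℝ} (hr : 0 < r)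
    (hR : R ≤ 2) (hl : 0 ≤ l) {a : ℝ → ℝ} (ha : EqOn a (levyDensity Y Cp Cm 1) (annulus r R)) :
    HasDensityUpTo (annulus r R) (ENNReal.ofReal l • levyMeasure Y Cp Cm q) (fun x => l * a x)
      (l * (max 1 r⁻¹ * r⁻¹ * ((Cp + Cm) * tiltDefect Y q))) := by
  intro g A hg hgA hg0
  have hA : 0 ≤ A := (abs_nonneg _).trans (hgA 0)
  have hstable : ∫ x, g x * a x = ∫ x, g x ∂(levyMeasure Y Cp Cm 1) := by
    rw [integral_levyMeasure hCp hCm measurable_one fun _ => zero_le_one]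
    congr 1 with x
    by_cases hx : x ∈ annulus r R
    · rw [ha hx, mul_comm]
    · simp [hg0 x hx]
  have hgB (x : ℝ) : |g x| ≤ A * (max 1 r⁻¹ * r⁻¹) * sqMinAbs x := by
    by_cases hx : x ∈ annulus r R
    · have hsq : 1 ≤ max 1 r⁻¹ * r⁻¹ * sqMinAbs x := by
        rw [mul_right_comm, ← div_eq_mul_inv, one_le_div hr]
        exact hx.1.trans (abs_le_mul_sqMinAbs hr hx.1)
      rw [mul_assoc]
      exact (hgA x).trans (le_mul_of_one_le_right hA hsq)
    · rw [hg0 x hx, abs_zero]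
      have := sqMinAbs_nonneg x
      positivity
  have hg2 (x : ℝ) (hx : x ∉ Icc (-2 : ℝ) 2) : g x = 0 :=
    hg0 x fun h => hx (abs_le.1 (h.2.trans hR))
  simp only [mul_left_comm (g _)]
  rw [integral_smul_measure, ENNReal.toReal_ofReal hl, smul_eq_mul, integral_const_mul, hstable,
    ← mul_sub, abs_mul, abs_of_nonneg hl]
  calc _ ≤ l * (A * (max 1 r⁻¹ * r⁻¹) * ((Cp + Cm) * tiltDefect Y q)) := by
        gcongr
        exact abs_integral_levyMeasure_sub_le hY1 hY2 hCp hCm hqm hq hQ hg hgB hg2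
    _ = _ := by ring

theorem abs_comp_mul_sub_one_mul_le (Y : ℝ) {α A c x : ℝ} (hα : |α| ≤ A) (hc : 0 < c)
    (hx : |x| ≤ 2) : |q (c * x) - 1| * (sqMinAbs x * |x| ^ (-1 - Y))
      ≤ 2 * c ^ (1 + Y) * (|q (c * x) - 1 - α * (c * x)| * |c * x| ^ (-1 - Y))
        + 2 * A * c * (sqMinAbs x * |x| ^ (-1 - Y)) := by
  have hK : 0 ≤ sqMinAbs x * |x| ^ (-1 - Y) := mul_nonneg (sqMinAbs_nonneg x) (by positivity)
  have htri : |q (c * x) - 1| ≤ |q (c * x) - 1 - α * (c * x)| + 2 * A * c := by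
    have hlin : |α * (c * x)| ≤ A * (c * 2) := by
      rw [abs_mul, abs_mul, abs_of_pos hc]
      gcongr
      exact (abs_nonneg α).trans hα
    linarith [abs_sub_abs_le_abs_sub (q (c * x) - 1) (α * (c * x))]
  have hscale : c ^ (1 + Y) * |c * x| ^ (-1 - Y) = |x| ^ (-1 - Y) := by
    rw [abs_mul, abs_of_pos hc, Real.mul_rpow hc.le (abs_nonneg x), ← mul_assoc,
      ← Real.rpow_add hc]
    norm_num
  calc _ ≤ (|q (c * x) - 1 - α * (c * x)| + 2 * A * c) * (sqMinAbs x * |x| ^ (-1 - Y)) := by gcongr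
    _ ≤ |q (c * x) - 1 - α * (c * x)| * (2 * |x| ^ (-1 - Y))
        + 2 * A * c * (sqMinAbs x * |x| ^ (-1 - Y)) := by
        rw [add_mul]
        gcongr
        exact (min_le_right _ _).trans hx
    _ = _ := by
        rw [← hscale]
        ring

theorem exists_tiltDefect_comp_mul_le (hY1 : 1 < Y) (hY2 : Y < 2) {α : ℝ → ℝ} {A : ℝ}
    (hα : ∀ x, |α x| ≤ A)
    (hq : IntegrableOn (fun x => |q x - 1 - α x * x| * |x| ^ (-1 - Y)) (Icc (-1) 1)) :
    ∃ C : ℝ, 0 ≤ C ∧ ∀ c : ℝ, 0 < c → 2 * c ≤ 1 → tiltDefect Y (fun x => q (c * x)) ≤ C * c := by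
  set g := (Icc (-1 : ℝ) 1).indicator fun x => |q x - 1 - α x * x| * |x| ^ (-1 - Y)
  have hg : Integrable g := (integrable_indicator_iff measurableSet_Icc).2 hq
  have hg0 (x : ℝ) : 0 ≤ g x := indicator_nonneg (fun x _ => by positivity) x
  set K : ℝ → ℝ := fun x => sqMinAbs x * |x| ^ (-1 - Y)
  have hK : Integrable K := integrable_sqMinAbs_mul_rpow hY1 hY2
  have hK0 (x : ℝ) : 0 ≤ K x := mul_nonneg (sqMinAbs_nonneg x) (by positivity)
  have hA : 0 ≤ A := (abs_nonneg _).trans (hα 0)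
  refine ⟨2 * (∫ x, g x) + 2 * A * ∫ x, K x,
    add_nonneg (mul_nonneg zero_le_two (integral_nonneg hg0))
      (mul_nonneg (by positivity) (integral_nonneg hK0)), fun c hc hc2 => ?_⟩
  have hpoint (x : ℝ) (hx : x ∈ Icc (-2 : ℝ) 2) :
      |q (c * x) - 1| * K x ≤ 2 * c ^ (1 + Y) * g (c * x) + 2 * A * c * K x := by
    have hcx : c * x ∈ Icc (-1 : ℝ) 1 := by constructor <;> nlinarith [hx.1, hx.2]
    simp only [g, indicator_of_mem hcx]
    exact abs_comp_mul_sub_one_mul_le Y (hα _) hc (abs_le.2 hx)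
  have hcY : c ^ (1 + Y) * c⁻¹ ≤ c := by
    rw [Real.rpow_one_add' hc.le (by linarith), mul_right_comm, mul_inv_cancel₀ hc.ne', one_mul]
    simpa using Real.rpow_le_rpow_of_exponent_ge hc (by linarith) hY1.le
  have hgc : Integrable fun x => 2 * c ^ (1 + Y) * g (c * x) :=
    (hg.comp_mul_left' hc.ne').const_mul _
  calc tiltDefect Y (fun x => q (c * x))
      ≤ ∫ x in Icc (-2) 2, (2 * c ^ (1 + Y) * g (c * x) + 2 * A * c * K x) :=
        integral_mono_of_nonneg (ae_of_all _ fun x => mul_nonneg (abs_nonneg _) (hK0 x))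
          (hgc.add (hK.const_mul _)).integrableOn
          ((ae_restrict_iff' measurableSet_Icc).2 (ae_of_all _ hpoint))
    _ ≤ ∫ x, (2 * c ^ (1 + Y) * g (c * x) + 2 * A * c * K x) :=
        setIntegral_le_integral (hgc.add (hK.const_mul _)) (ae_of_all _ fun x => add_nonneg
          (mul_nonneg (by positivity) (hg0 _)) (mul_nonneg (by positivity) (hK0 x)))
    _ = 2 * (c ^ (1 + Y) * c⁻¹) * (∫ x, g x) + 2 * A * c * ∫ x, K x := by
        rw [integral_add hgc (hK.const_mul _), integral_const_mul, integral_const_mul,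
          Measure.integral_comp_mul_left, abs_of_pos (inv_pos.2 hc), smul_eq_mul]
        ring
    _ ≤ 2 * c * (∫ x, g x) + 2 * A * c * ∫ x, K x := by
        gcongr
        exact integral_nonneg hg0
    _ = _ := by ring

theorem integrableOn_Icc_of_Ioc_of_Ico {αp αm : ℝ}
    (hp : IntegrableOn (fun x => |q x - 1 - αp * x| * x ^ (-Y - 1)) (Ioc 0 1))
    (hm : IntegrableOn (fun x => |q x - 1 - αm * x| * |x| ^ (-Y - 1)) (Ico (-1) 0)) :
    IntegrableOn (fun x => |q x - 1 - (if 0 < x then αp else αm) * x| * |x| ^ (-1 - Y))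
      (Icc (-1) 1) := by
  have hY : -1 - Y = -Y - 1 := by ring
  rw [← Icc_union_Ioc_eq_Icc (by norm_num : (-1 : ℝ) ≤ 0) zero_le_one,
    integrableOn_union, integrableOn_Icc_iff_integrableOn_Ico]
  refine ⟨hm.congr_fun (fun x hx => ?_) measurableSet_Ico,
    hp.congr_fun (fun x hx => ?_) measurableSet_Ioc⟩
  · simp only [hY, if_neg hx.2.le.not_gt]
  · simp only [hY, if_pos hx.1, abs_of_pos hx.1]

end TiltDefect

/-! ### Truncated even powers -/

section CutPow

variable {k : ℕ}

/-- The even power `x ^ (2 * k)`, sharply cut off at `|x| = 1`. -/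
def cutPow (k : ℕ) : ℝ → ℝ := {x : ℝ | |x| ≤ 1}.indicator fun x => x ^ (2 * k)

theorem cutPow_of_le {x : ℝ} (hx : |x| ≤ 1) : cutPow k x = x ^ (2 * k) :=
  indicator_of_mem (s := {x : ℝ | |x| ≤ 1}) hx _

theorem cutPow_of_lt {x : ℝ} (hx : 1 < |x|) : cutPow k x = 0 :=
  indicator_of_notMem (s := {x : ℝ | |x| ≤ 1}) hx.not_ge _

theorem cutPow_neg (k : ℕ) (x : ℝ) : cutPow k (-x) = cutPow k x := by
  simp [cutPow, indicator, (even_two_mul k).neg_pow]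

theorem measurable_cutPow (k : ℕ) : Measurable (cutPow k) :=
  (measurable_id.pow_const _).indicator (measurableSet_le measurable_norm measurable_const)

theorem cutPow_nonneg (k : ℕ) (x : ℝ) : 0 ≤ cutPow k x :=
  indicator_nonneg (fun y _ => (even_two_mul k).pow_nonneg y) x

theorem cutPow_le_one (k : ℕ) (x : ℝ) : cutPow k x ≤ 1 := by
  rcases le_or_gt |x| 1 with hx | hx
  · rw [cutPow_of_le hx, ← (even_two_mul k).pow_abs]
    exact pow_le_one₀ (abs_nonneg x) hx
  · exact (cutPow_of_lt hx).trans_le zero_le_one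

theorem cutPow_le_pow (k : ℕ) (x : ℝ) : cutPow k x ≤ x ^ (2 * k) :=
  indicator_le_self' (fun x _ => (even_two_mul k).pow_nonneg x) x

theorem abs_cutPow_le_sqMinAbs (hk : 1 ≤ k) (x : ℝ) : |cutPow k x| ≤ sqMinAbs x := by
  rw [abs_of_nonneg (cutPow_nonneg k x)]
  rcases le_or_gt |x| 1 with hx | hx
  · have hsq : x ^ 2 ≤ |x| := by
      rw [← sq_abs]
      exact pow_le_of_le_one (abs_nonneg x) hx two_ne_zero
    rw [cutPow_of_le hx, sqMinAbs, min_eq_left hsq, ← sq_abs, ← (even_two_mul k).pow_abs]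
    exact pow_le_pow_of_le_one (abs_nonneg x) hx (by omega)
  · exact (cutPow_of_lt hx).trans_le (sqMinAbs_nonneg x)

theorem setIntegral_Ioi_cutPow_mul_rpow {Y : ℝ} (hY : Y < 2 * k) :
    ∫ x in Ioi 0, cutPow k x * x ^ (-1 - Y) = 1 / (2 * k - Y) := by
  have hcut (x : ℝ) (hx : x ∈ Ioi 0) :
      cutPow k x * x ^ (-1 - Y) = (Ioc 0 1).indicator (fun x => x ^ (2 * k - Y - 1)) x := by
    have hx0 : 0 < x := hx
    rcases le_or_gt x 1 with h1 | h1
    · rw [indicator_of_mem (show x ∈ Ioc 0 1 from ⟨hx0, h1⟩),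
        cutPow_of_le (by rwa [abs_of_pos hx0]), ← Real.rpow_natCast, ← Real.rpow_add hx0]
      push_cast
      ring_nf
    · rw [indicator_of_notMem fun h => h1.not_ge h.2, cutPow_of_lt (by rwa [abs_of_pos hx0]),
        zero_mul]
  rw [setIntegral_congr_fun measurableSet_Ioi hcut, setIntegral_indicator measurableSet_Ioc,
    inter_eq_right.2 Ioc_subset_Ioi_self, ← intervalIntegral.integral_of_le zero_le_one,
    integral_rpow (Or.inl (by linarith)), Real.zero_rpow (by linarith), Real.one_rpow]
  ring_nf

theorem integral_cutPow_levyMeasure_one {Y Cp Cm : ℝ} (hY1 : 1 < Y) (hY2 : Y < 2) (hCp : 0 ≤ Cp)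
    (hCm : 0 ≤ Cm) (hk : 1 ≤ k) :
    ∫ x, cutPow k x ∂(levyMeasure Y Cp Cm 1) = (Cp + Cm) / (2 * k - Y) := by
  have hYk : Y < 2 * k := by
    have : (1 : ℝ) ≤ k := mod_cast hk
    linarith
  have hint : Integrable fun x => levyDensity Y Cp Cm 1 x * cutPow k x :=
    (integrable_levyMeasure_iff hCp hCm measurable_one fun _ => zero_le_one).1 <|
      (integrable_sqMinAbs_levyMeasure hY1 hY2 hCp hCm measurable_one (fun _ => zero_le_one)
        fun _ => le_rfl).mono' (measurable_cutPow k).aestronglyMeasurable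
          (ae_of_all _ (abs_cutPow_le_sqMinAbs hk))
  have hpos : ∫ x in Ioi 0, levyDensity Y Cp Cm 1 x * cutPow k x = Cp * (1 / (2 * k - Y)) := by
    rw [← setIntegral_Ioi_cutPow_mul_rpow hYk, ← integral_const_mul]
    refine setIntegral_congr_fun measurableSet_Ioi fun x hx => ?_
    simp only [levyDensity, if_pos (mem_Ioi.1 hx), Pi.one_apply, abs_of_pos (mem_Ioi.1 hx)]
    ring
  have hneg : ∫ x in Iic 0, levyDensity Y Cp Cm 1 x * cutPow k x = Cm * (1 / (2 * k - Y)) := by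
    rw [← neg_zero, ← integral_comp_neg_Ioi 0 fun x => levyDensity Y Cp Cm 1 x * cutPow k x,
      ← setIntegral_Ioi_cutPow_mul_rpow hYk, ← integral_const_mul]
    refine setIntegral_congr_fun measurableSet_Ioi fun x hx => ?_
    have hx0 : 0 < x := hx
    simp only [levyDensity, neg_pos, if_neg hx0.le.not_gt, neg_lt_zero, if_pos hx0, Pi.one_apply,
      abs_neg, abs_of_pos hx0, cutPow_neg]
    ring
  rw [integral_levyMeasure hCp hCm measurable_one fun _ => zero_le_one,
    ← intervalIntegral.integral_Iic_add_Ioi hint.integrableOn hint.integrableOn, hpos, hneg]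
  ring

theorem integrable_cutPow (k : ℕ) (μ : Measure ℝ) [IsFiniteMeasure μ] :
    Integrable (cutPow k) μ :=
  Integrable.of_bound (measurable_cutPow k).aestronglyMeasurable 1 <| ae_of_all _ fun x => by
    rw [Real.norm_of_nonneg (cutPow_nonneg k x)]
    exact cutPow_le_one k x

theorem exists_contDiff_eq_pow_of_abs_le (hk : 1 ≤ k) : ∃ F : ℝ → ℝ, ContDiff ℝ (⊤ : ℕ∞) F ∧
    HasCompactSupport F ∧ HasDerivAt F 0 0 ∧ (∀ x, |x| ≤ 1 / 2 → F x = x ^ (2 * k)) ∧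
      ∀ x, F x ∈ Icc 0 (cutPow k x) := by
  let χ : ContDiffBump (0 : ℝ) := ⟨1 / 2, 1, by norm_num, by norm_num⟩
  have heven (x : ℝ) : 0 ≤ x ^ (2 * k) := (even_two_mul k).pow_nonneg x
  refine ⟨fun x => x ^ (2 * k) * χ x, (contDiff_id.pow _).mul χ.contDiff,
    χ.hasCompactSupport.mul_left, ?_, fun x hx => ?_, fun x =>
      ⟨mul_nonneg (heven x) χ.nonneg, ?_⟩⟩
  · have hpow : HasDerivAt (fun x : ℝ => x ^ (2 * k)) 0 0 := by
      simpa [show 2 * k - 1 ≠ 0 by omega] using hasDerivAt_pow (2 * k) (0 : ℝ)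
    refine hpow.congr_of_eventuallyEq ?_
    filter_upwards [χ.eventuallyEq_one] with x hx
    simp [hx]
  · have hχ : χ x = 1 := χ.one_of_mem_closedBall (mem_closedBall_zero_iff.2 hx)
    exact (congrArg (x ^ (2 * k) * ·) hχ).trans (mul_one _)
  · rcases le_or_gt |x| 1 with hx | hx
    · rw [cutPow_of_le hx]
      exact mul_le_of_le_one_right (heven x) χ.le_one
    · have hχ : χ x = 0 := χ.zero_of_le_dist ((dist_zero_right x).symm ▸ hx.le)
      exact (cutPow_of_lt hx).symm ▸ ((congrArg (x ^ (2 * k) * ·) hχ).trans (mul_zero _)).le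

theorem abs_cutPow_sub_le_one {F : ℝ → ℝ} (hF : ∀ x, F x ∈ Icc 0 (cutPow k x)) (x : ℝ) :
    |cutPow k x - F x| ≤ 1 := by
  rw [abs_of_nonneg (sub_nonneg.2 (hF x).2)]
  exact (sub_le_self _ (hF x).1).trans (cutPow_le_one k x)

theorem cutPow_sub_eq_zero_of_notMem_annulus {F : ℝ → ℝ} {r : ℝ}
    (hFr : ∀ x, |x| ≤ r → F x = x ^ (2 * k)) (hF : ∀ x, F x ∈ Icc 0 (cutPow k x)) {x : ℝ}
    (hx : x ∉ annulus r 1) : cutPow k x - F x = 0 := by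
  rcases le_or_gt |x| 1 with h1 | h1
  · have hxr : |x| ≤ r := le_of_not_ge fun h => hx ⟨h, h1⟩
    rw [cutPow_of_le h1, hFr x hxr, sub_self]
  · have hFx := hF x
    rw [cutPow_of_lt h1, Icc_self, mem_singleton_iff] at hFx
    rw [cutPow_of_lt h1, hFx, sub_zero]

end CutPow

section GaussianMoments

theorem integral_pow_two_mul_gaussianReal (v : ℝ≥0) (n : ℕ) :
    ∫ x, x ^ (2 * n) ∂(gaussianReal 0 v) = (Nat.doubleFactorial (2 * n - 1) : ℝ) * v ^ n := by
  rcases eq_or_ne v 0 with rfl | hv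
  · rcases eq_or_ne n 0 with rfl | hn <;> simp [*]
  have : (0 : ℝ) < v := by positivity
  set p : ℝ → ℝ := fun y => (√(2 * π * v))⁻¹ *
    (y ^ (((2 * n : ℕ) : ℝ)) * Real.exp (-(2 * v : ℝ)⁻¹ * y ^ (2 : ℝ))) with hp
  have hpdf (x : ℝ) : gaussianPDFReal 0 v x • x ^ (2 * n) = p |x| := by
    have hexp : -x ^ 2 / (2 * v) = -(2 * v : ℝ)⁻¹ * x ^ 2 := by ring
    simp only [hp, gaussianPDFReal, smul_eq_mul, sub_zero, Real.rpow_natCast, Real.rpow_ofNat,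
      sq_abs, (even_two_mul n).pow_abs, hexp]
    ring
  have hsqrt : √(2 * π * v) = √π * √(2 * v) := by
    rw [← Real.sqrt_mul Real.pi_nonneg]
    ring_nf
  have hhalf : (((2 * n : ℕ) : ℝ) + 1) / 2 = n + 1 / 2 := by push_cast; ring
  have hpi : √π ≠ 0 := by positivity
  have hroot : √(2 * (v : ℝ)) ≠ 0 := by positivity
  simp only [integral_gaussianReal_eq_integral_smul hv, hpdf]
  rw [integral_comp_abs, hp, integral_const_mul,
    integral_rpow_mul_exp_neg_mul_rpow (by norm_num)
      (neg_one_lt_zero.trans_le (Nat.cast_nonneg _)) (by positivity), neg_div, hhalf,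
    Real.Gamma_nat_add_half, Real.rpow_neg (by positivity), Real.inv_rpow (by positivity),
    inv_inv, Real.rpow_add (by positivity), Real.rpow_natCast, ← Real.sqrt_eq_rpow, hsqrt]
  field_simp
  rw [mul_pow]

theorem integrable_pow_gaussianReal (v : ℝ≥0) (n : ℕ) :
    Integrable (fun x : ℝ => x ^ n) (gaussianReal 0 v) := by
  refine (integrable_norm_iff (by fun_prop)).1 ?_
  simpa using (memLp_id_gaussianReal (μ := 0) (v := v) n).integrable_norm_pow'

theorem abs_integral_gaussianReal_le (v : ℝ≥0) {g : ℝ → ℝ} {B : ℝ} {n : ℕ}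
    (hg : ∀ x, |g x| ≤ B * x ^ (2 * n)) :
    |∫ x, g x ∂(gaussianReal 0 v)| ≤ B * ((Nat.doubleFactorial (2 * n - 1) : ℝ) * v ^ n) := by
  rw [← integral_pow_two_mul_gaussianReal, ← integral_const_mul]
  exact abs_integral_le_of_abs_le ((integrable_pow_gaussianReal v _).const_mul B) hg

theorem gaussianReal_real_le_abs_le (v : ℝ≥0) {r : ℝ} (hr : 0 < r) (n : ℕ) :
    (gaussianReal 0 v).real {x | r ≤ |x|}
      ≤ (r ^ (2 * n))⁻¹ * ((Nat.doubleFactorial (2 * n - 1) : ℝ) * v ^ n) := by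
  have hmeas : MeasurableSet {x : ℝ | r ≤ |x|} := measurableSet_le measurable_const measurable_norm
  rw [← integral_indicator_one hmeas]
  refine (le_abs_self _).trans (abs_integral_gaussianReal_le v fun x => ?_)
  by_cases hx : r ≤ |x|
  · rw [indicator_of_mem (show x ∈ {x : ℝ | r ≤ |x|} from hx), Pi.one_apply, abs_one,
      ← (even_two_mul n).pow_abs x, inv_mul_eq_div, one_le_div (by positivity)]
    gcongr
  · rw [indicator_of_notMem (show x ∉ {x : ℝ | r ≤ |x|} from hx), abs_zero]
    exact mul_nonneg (by positivity) ((even_two_mul n).pow_nonneg x)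

theorem abs_integral_gaussianReal_sub_le (v : ℝ≥0) {F : ℝ → ℝ} {k n : ℕ} (hkn : k ≤ n)
    (hF : Measurable F) {r : ℝ} (hr : 0 < r) (hFr : ∀ x, |x| ≤ r → F x = x ^ (2 * k))
    (hF0 : ∀ x, F x ∈ Icc 0 (x ^ (2 * k))) :
    |∫ x, F x ∂(gaussianReal 0 v) - (Nat.doubleFactorial (2 * k - 1) : ℝ) * v ^ k|
      ≤ (r ^ (2 * (n - k)))⁻¹ * ((Nat.doubleFactorial (2 * n - 1) : ℝ) * v ^ n) := by
  have hpow := integrable_pow_gaussianReal v (2 * k)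
  have hFi : Integrable F (gaussianReal 0 v) := hpow.mono' hF.aestronglyMeasurable <|
    ae_of_all _ fun x => by rw [Real.norm_of_nonneg (hF0 x).1]; exact (hF0 x).2
  rw [← integral_pow_two_mul_gaussianReal, ← integral_sub hFi hpow]
  refine abs_integral_gaussianReal_le v fun x => ?_
  have heven (m : ℕ) : 0 ≤ x ^ (2 * m) := (even_two_mul m).pow_nonneg x
  rcases le_or_gt |x| r with hx | hx
  · rw [hFr x hx, sub_self, abs_zero]
    exact mul_nonneg (by positivity) (heven n)
  · have hfactor : x ^ (2 * n) = x ^ (2 * (n - k)) * x ^ (2 * k) := by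
      rw [← pow_add]
      congr 1
      omega
    have hlarge : r ^ (2 * (n - k)) ≤ x ^ (2 * (n - k)) := by
      rw [← (even_two_mul (n - k)).pow_abs x]
      gcongr
    rw [abs_sub_comm, abs_of_nonneg (sub_nonneg.2 (hF0 x).2), hfactor, ← mul_assoc,
      inv_mul_eq_div]
    exact (sub_le_self _ (hF0 x).1).trans
      (le_mul_of_one_le_left (heven k) ((one_le_div (by positivity)).2 hlarge))

end GaussianMoments

section CutPowMoments

variable {k n : ℕ} {c r : ℝ}

theorem exists_abs_integral_sub_pow_sub_integral_le (hkn : k ≤ n) (hc : 0 ≤ c) {F : ℝ → ℝ}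
    (hF : ContDiff ℝ (⊤ : ℕ∞) F) (hFc : HasCompactSupport F) (hd : HasDerivAt F 0 0) (h0 : F 0 = 0)
    (hr : 0 < r) (hFr : ∀ x, |x| ≤ r → F x = x ^ (2 * k)) (hFm : ∀ x, F x ∈ Icc 0 (x ^ (2 * k))) :
    ∃ C : ℝ, 0 ≤ C ∧ ∀ (μ ν : Measure ℝ) [IsProbabilityMeasure μ] [SFinite ν] (β : ℝ) (s : ℝ≥0)
      (l : ℝ), HasLevyTriplet μ β s ν → 0 ≤ l → jumpActivity β ν ≤ c * l →
        |∫ x, F x ∂μ - (Nat.doubleFactorial (2 * k - 1) : ℝ) * s ^ k - ∫ x, F x ∂ν|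
          ≤ C * (l * (l + s) + s ^ n) := by
  obtain ⟨K, hK, hjumps⟩ := exists_abs_integral_sub_gaussianReal_sub_le hF hFc hd
  set G : ℝ := (r ^ (2 * (n - k)))⁻¹ * Nat.doubleFactorial (2 * n - 1)
  have : 0 ≤ G := by positivity
  refine ⟨K * (c * (c + 1)) + G, by positivity, fun μ ν _ _ β s l h hl hact => ?_⟩
  have hact2 : jumpActivity β ν * (jumpActivity β ν + s) ≤ c * (c + 1) * (l * (l + s)) :=
    calc jumpActivity β ν * (jumpActivity β ν + s) ≤ c * l * (c * l + s) := by
          gcongr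
          exact add_nonneg (jumpActivity_nonneg β ν) s.2
      _ ≤ c * l * ((c + 1) * (l + s)) := by
          gcongr
          nlinarith [s.2, mul_nonneg hc s.2]
      _ = _ := by ring
  have hlevy : |∫ x, F x ∂μ - ∫ x, F x ∂(gaussianReal 0 s) - ∫ x, F x ∂ν|
      ≤ K * (c * (c + 1) * (l * (l + s))) := by
    simpa only [h0, sub_zero] using (hjumps μ ν β s h).trans (mul_le_mul_of_nonneg_left hact2 hK)
  have hgauss : |∫ x, F x ∂(gaussianReal 0 s) - (Nat.doubleFactorial (2 * k - 1) : ℝ) * s ^ k|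
      ≤ G * s ^ n :=
    (abs_integral_gaussianReal_sub_le s hkn hF.continuous.measurable hr hFr hFm).trans_eq
      (mul_assoc _ _ _).symm
  calc _ = |(∫ x, F x ∂μ - ∫ x, F x ∂(gaussianReal 0 s) - ∫ x, F x ∂ν)
          + (∫ x, F x ∂(gaussianReal 0 s) - (Nat.doubleFactorial (2 * k - 1) : ℝ) * s ^ k)| := by
        ring_nf
    _ ≤ K * (c * (c + 1) * (l * (l + s))) + G * s ^ n :=
        (abs_add_le _ _).trans (add_le_add hlevy hgauss)
    _ ≤ (K * (c * (c + 1)) + G) * (l * (l + s)) + (K * (c * (c + 1)) + G) * s ^ n := by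
        rw [← mul_assoc]
        gcongr <;> simp only [le_add_iff_nonneg_right, le_add_iff_nonneg_left] <;> positivity
    _ = _ := by ring

theorem exists_abs_integral_sub_le_pow_of_hasDensityUpTo (hr : 0 < r) {R : ℝ} (hR : 0 ≤ R)
    (hc : 0 ≤ c) (n : ℕ) {a : ℝ → ℝ} (ha : ContDiff ℝ (⊤ : ℕ∞) a) (hac : HasCompactSupport a) :
    ∃ C : ℝ, 0 ≤ C ∧ ∀ (μ ν : Measure ℝ) [IsProbabilityMeasure μ] [SFinite ν] (β : ℝ) (s : ℝ≥0)
      (l D : ℝ) (f : ℝ → ℝ) (A : ℝ), HasLevyTriplet μ β s ν → 0 ≤ l → jumpActivity β ν ≤ c * l →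
        l ≤ 1 → 0 ≤ D → HasDensityUpTo (annulus (2 * r) (R + 2 * r)) ν (fun x => l * a x) D →
        Measurable f → (∀ x, |f x| ≤ A) → (∀ x ∉ annulus (4 * r) R, f x = 0) →
        |∫ x, f x ∂μ - ∫ x, f x ∂ν| ≤ A * (C * (l * (l + s) + s ^ n + D)) := by
  obtain ⟨C, hC, hedge⟩ := exists_abs_integral_sub_le_of_hasDensityUpTo hr hR ha hac hc
  set G : ℝ := (r ^ (2 * n))⁻¹ * Nat.doubleFactorial (2 * n - 1)
  have hG : 0 ≤ G := by positivity
  refine ⟨C * (1 + G), by positivity, fun μ ν _ _ β s l D f A h hl hact hl1 hD0 hD hf hfA hf0 =>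
    (hedge μ ν β s l D f A h hl hact hl1 hD hf hfA hf0).trans ?_⟩
  have hA : 0 ≤ A := (abs_nonneg _).trans (hfA 0)
  have htail : (gaussianReal 0 s).real {x | r ≤ |x|} ≤ G * s ^ n :=
    (gaussianReal_real_le_abs_le s hr n).trans_eq (mul_assoc _ _ _).symm
  have hls : 0 ≤ l * (l + s) := by positivity
  have hsn : (0 : ℝ) ≤ s ^ n := by positivity
  rw [mul_assoc C]
  gcongr
  nlinarith [mul_nonneg hG hls, mul_nonneg hG hD0]

theorem exists_abs_integral_cutPow_sub_integral_le (hk : 1 ≤ k) (hkn : k ≤ n) (hc : 0 ≤ c)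
    {a : ℝ → ℝ} (ha : ContDiff ℝ (⊤ : ℕ∞) a) (hac : HasCompactSupport a) :
    ∃ C : ℝ, 0 ≤ C ∧ ∀ (μ ν : Measure ℝ) [IsProbabilityMeasure μ] [SFinite ν] (β : ℝ) (s : ℝ≥0)
      (l D : ℝ), HasLevyTriplet μ β s ν → 0 ≤ l → jumpActivity β ν ≤ c * l → l ≤ 1 → 0 ≤ D →
        HasDensityUpTo (annulus (2 * (1 / 8)) (1 + 2 * (1 / 8))) ν (fun x => l * a x) D →
        |∫ x, cutPow k x ∂μ - (Nat.doubleFactorial (2 * k - 1) : ℝ) * s ^ k - ∫ x, cutPow k x ∂ν|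
          ≤ C * (l * (l + s) + s ^ n + D) := by
  obtain ⟨F, hF, hFc, hd, hFpow, hFmem⟩ := exists_contDiff_eq_pow_of_abs_le hk
  have hFm : Measurable F := hF.continuous.measurable
  obtain ⟨C₁, hC₁, hbulk⟩ := exists_abs_integral_sub_pow_sub_integral_le hkn hc hF hFc hd
    (by simpa [show k ≠ 0 by omega] using hFpow 0 (by simp)) one_half_pos hFpow
    fun x => ⟨(hFmem x).1, (hFmem x).2.trans (cutPow_le_pow k x)⟩
  obtain ⟨C₂, hC₂, hedge⟩ := exists_abs_integral_sub_le_pow_of_hasDensityUpTo (r := 1 / 8)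
    (by norm_num) zero_le_one hc n ha hac
  refine ⟨C₁ + C₂, by positivity, fun μ ν _ _ β s l D h hl hact hl1 hD0 hD => ?_⟩
  have hsplit {m : Measure ℝ} (hm : Integrable (cutPow k) m) :
      ∫ x, cutPow k x ∂m = ∫ x, F x ∂m + ∫ x, (cutPow k x - F x) ∂m := by
    have hFi : Integrable F m := hm.mono' hFm.aestronglyMeasurable <|
      ae_of_all _ fun x => by rw [Real.norm_of_nonneg (hFmem x).1]; exact (hFmem x).2
    rw [integral_sub hm hFi, add_sub_cancel]
  rw [hsplit (integrable_cutPow k μ), hsplit (h.integrable_sqMinAbs.mono'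
    (measurable_cutPow k).aestronglyMeasurable (ae_of_all _ (abs_cutPow_le_sqMinAbs hk)))]
  calc _ = |(∫ x, F x ∂μ - (Nat.doubleFactorial (2 * k - 1) : ℝ) * s ^ k - ∫ x, F x ∂ν)
          + (∫ x, (cutPow k x - F x) ∂μ - ∫ x, (cutPow k x - F x) ∂ν)| := by ring_nf
    _ ≤ C₁ * (l * (l + s) + s ^ n) + 1 * (C₂ * (l * (l + s) + s ^ n + D)) :=
        (abs_add_le _ _).trans <| add_le_add (hbulk μ ν β s l h hl hact) <|
          hedge μ ν β s l D _ 1 h hl hact hl1 hD0 hD ((measurable_cutPow k).sub hFm)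
            (abs_cutPow_sub_le_one hFmem) fun x hx =>
              cutPow_sub_eq_zero_of_notMem_annulus hFpow hFmem (by norm_num at hx ⊢; exact hx)
    _ ≤ (C₁ + C₂) * (l * (l + s) + s ^ n + D) := by
        nlinarith [mul_nonneg hC₁ hD0]

theorem jumpActivity_smul_levyMeasure_le {Y Cp Cm Q β l : ℝ} {q : ℝ → ℝ} (hY1 : 1 < Y)
    (hY2 : Y < 2) (hCp : 0 ≤ Cp) (hCm : 0 ≤ Cm) (hqm : Measurable q) (hq : ∀ x, 0 ≤ q x)
    (hQ : ∀ x, q x ≤ Q) (hl : 0 ≤ l) (hβ : |β| ≤ c * l) :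
    jumpActivity β (ENNReal.ofReal l • levyMeasure Y Cp Cm q)
      ≤ (c + (Cp + Cm) * Q * ∫ x, sqMinAbs x * |x| ^ (-1 - Y)) * l := by
  rw [jumpActivity, integral_smul_measure, ENNReal.toReal_ofReal hl, smul_eq_mul, add_mul,
    mul_comm _ l, mul_comm _ l]
  refine add_le_add (hβ.trans_eq (mul_comm c l)) (mul_le_mul_of_nonneg_left ?_ hl)
  exact integral_sqMinAbs_levyMeasure_le hY1 hY2 hCp hCm hqm hq hQ

theorem exists_abs_integral_cutPow_sub_le {Y Cp Cm Q : ℝ} (hY1 : 1 < Y) (hY2 : Y < 2)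
    (hCp : 0 ≤ Cp) (hCm : 0 ≤ Cm) (hQ0 : 0 ≤ Q) (hk : 1 ≤ k) (hkn : k ≤ n) (hc : 0 ≤ c) :
    ∃ C : ℝ, 0 ≤ C ∧ ∀ (μ : Measure ℝ) [IsProbabilityMeasure μ] (q : ℝ → ℝ) (β : ℝ) (s : ℝ≥0)
      (l : ℝ), Measurable q → (∀ x, 0 ≤ q x) → (∀ x, q x ≤ Q) →
        HasLevyTriplet μ β s (ENNReal.ofReal l • levyMeasure Y Cp Cm q) → 0 ≤ l → l ≤ 1 →
        |β| ≤ c * l →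
        |∫ x, cutPow k x ∂μ - (Nat.doubleFactorial (2 * k - 1) : ℝ) * s ^ k
            - l * ((Cp + Cm) / (2 * k - Y))|
          ≤ C * (l * (l + s) + s ^ n + l * tiltDefect Y q) := by
  obtain ⟨a, ha, hac, haeq⟩ := exists_contDiff_eqOn_levyDensity_one (r := 2 * (1 / 8))
    (R := 1 + 2 * (1 / 8)) Y Cp Cm (by norm_num) (by norm_num)
  have hI : 0 ≤ ∫ x, sqMinAbs x * |x| ^ (-1 - Y) :=
    integral_nonneg fun x => mul_nonneg (sqMinAbs_nonneg x) (by positivity)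
  obtain ⟨C, hC, hcut⟩ := exists_abs_integral_cutPow_sub_integral_le hk hkn
    (c := c + (Cp + Cm) * Q * ∫ x, sqMinAbs x * |x| ^ (-1 - Y)) (by positivity) ha hac
  set w : ℝ := max 1 (2 * (1 / 8))⁻¹ * (2 * (1 / 8))⁻¹
  have : 0 ≤ w := by positivity
  refine ⟨C * (1 + w * (Cp + Cm)) + (Cp + Cm), by positivity,
    fun μ _ q β s l hqm hq hQ h hl hl1 hβ => ?_⟩
  have hdef := tiltDefect_nonneg Y q
  set ν := ENNReal.ofReal l • levyMeasure Y Cp Cm q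
  have hlaw := hcut μ ν β s l (l * (w * ((Cp + Cm) * tiltDefect Y q))) h hl
    (jumpActivity_smul_levyMeasure_le hY1 hY2 hCp hCm hqm hq hQ hl hβ) hl1 (by positivity) <|
      hasDensityUpTo_smul_levyMeasure hY1 hY2 hCp hCm hqm hq hQ (by norm_num) (by norm_num) hl haeq
  have hν : |∫ x, cutPow k x ∂ν - l * ((Cp + Cm) / (2 * k - Y))|
      ≤ l * (1 * ((Cp + Cm) * tiltDefect Y q)) := by
    rw [integral_smul_measure, ENNReal.toReal_ofReal hl, smul_eq_mul, ← mul_sub, abs_mul,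
      abs_of_nonneg hl, ← integral_cutPow_levyMeasure_one hY1 hY2 hCp hCm hk]
    gcongr
    exact abs_integral_levyMeasure_sub_le hY1 hY2 hCp hCm hqm hq hQ (measurable_cutPow k)
      (by simpa using abs_cutPow_le_sqMinAbs hk) fun x hx => cutPow_of_lt <|
        (by norm_num : (1 : ℝ) < 2).trans (lt_of_not_ge fun h => hx (abs_le.1 h))
  have : 0 ≤ l * (l + s) + s ^ n := by positivity
  calc _ = |(∫ x, cutPow k x ∂μ - (Nat.doubleFactorial (2 * k - 1) : ℝ) * s ^ k
          - ∫ x, cutPow k x ∂ν) + (∫ x, cutPow k x ∂ν - l * ((Cp + Cm) / (2 * k - Y)))| := by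
        ring_nf
    _ ≤ C * (l * (l + s) + s ^ n + l * (w * ((Cp + Cm) * tiltDefect Y q)))
        + l * (1 * ((Cp + Cm) * tiltDefect Y q)) := (abs_add_le _ _).trans (add_le_add hlaw hν)
    _ ≤ _ := by
        have hwls : 0 ≤ (C * (w * (Cp + Cm)) + (Cp + Cm)) * (l * (l + s) + s ^ n) := by positivity
        have hdefl : 0 ≤ C * (l * tiltDefect Y q) := by positivity
        linarith

end CutPowMoments

/-! ### Scaling and the law of the process -/

theorem HasLevyTriplet.map_mul {μ ν : Measure ℝ} {β : ℝ} {s : ℝ≥0} (h : HasLevyTriplet μ β s ν)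
    {c : ℝ} {t : ℝ≥0} (ht : (t : ℝ) = c ^ 2 * s) :
    HasLevyTriplet (μ.map (c * ·)) (c * β) t (ν.map (c * ·)) where
  integrable_sqMinAbs := by
    rw [integrable_map_measure continuous_sqMinAbs.aestronglyMeasurable (by fun_prop)]
    refine (h.integrable_sqMinAbs.const_mul (c ^ 2 + |c|)).mono'
      (continuous_sqMinAbs.comp (continuous_const_mul c)).aestronglyMeasurable
      (ae_of_all _ fun x => ?_)
    rw [Function.comp_apply, Real.norm_of_nonneg (sqMinAbs_nonneg _), sqMinAbs, sqMinAbs,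
      mul_min_of_nonneg _ _ (by positivity), mul_pow, abs_mul]
    gcongr <;> simp [sq_nonneg]
  charFun_eq u := by
    rw [charFun_map_mul, h.charFun_eq, jumpExponent_map_mul, ht]
    push_cast
    ring_nf

theorem psiJ_eq_jumpExponent {Y Cp Cm : ℝ} {q : ℝ → ℝ}
    (hν : Integrable sqMinAbs (levyMeasure Y Cp Cm q)) (b u : ℝ) :
    psiJ b Y Cp Cm q u = jumpExponent (b + ∫ x in {x | 1 < |x|}, x ∂(levyMeasure Y Cp Cm q))
      (levyMeasure Y Cp Cm q) u := by
  have hS : MeasurableSet {x : ℝ | 1 < |x|} := measurableSet_lt measurable_const measurable_norm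
  have hbig : Integrable ({x : ℝ | 1 < |x|}.indicator fun x => x) (levyMeasure Y Cp Cm q) :=
    (hν.const_mul (max 1 1⁻¹)).mono' (measurable_id.indicator hS).aestronglyMeasurable <|
      ae_of_all _ fun x => by
        rw [norm_indicator_eq_indicator_norm]
        exact indicator_le' (fun x hx => abs_le_mul_sqMinAbs one_pos (le_of_lt hx))
          (fun x _ => mul_nonneg (by positivity) (sqMinAbs_nonneg x)) x
  have hkernel (x : ℝ) : Complex.exp (Complex.I * u * x) - 1
      - (if |x| ≤ 1 then Complex.I * u * x else 0)
      = levyKernel u x + Complex.I * u * ({x : ℝ | 1 < |x|}.indicator (fun x => x) x : ℝ) := by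
    rcases le_or_gt |x| 1 with hx | hx
    · rw [if_pos hx, indicator_of_notMem (s := {x : ℝ | 1 < |x|}) hx.not_gt, levyKernel]
      simp
    · rw [if_neg hx.not_ge, indicator_of_mem (s := {x : ℝ | 1 < |x|}) hx, levyKernel]
      ring
  have hcomp : Integrable (fun x : ℝ => Complex.I * u *
      ({x : ℝ | 1 < |x|}.indicator (fun x => x) x : ℝ)) (levyMeasure Y Cp Cm q) :=
    hbig.ofReal.const_mul _
  simp only [psiJ, hkernel]
  rw [integral_add (integrable_levyKernel hν u) hcomp, integral_const_mul,
    integral_complex_ofReal, integral_indicator hS, jumpExponent]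
  push_cast
  ring

theorem hasLevyTriplet_map_add {Ω : Type*} [MeasurableSpace Ω] {P : Measure Ω}
    [IsProbabilityMeasure P] {G J : Ω → ℝ} {ν : Measure ℝ} {β : ℝ} {s : ℝ≥0} (hG : Measurable G)
    (hJ : Measurable J) (hGlaw : P.map G = gaussianReal 0 s) (hν : Integrable sqMinAbs ν)
    (hJlaw : ∀ u : ℝ, ∫ ω, Complex.exp (Complex.I * u * J ω) ∂P
      = Complex.exp (jumpExponent β ν u)) (hindep : IndepFun G J P) :
    HasLevyTriplet (P.map fun ω => G ω + J ω) β s ν where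
  integrable_sqMinAbs := hν
  charFun_eq u := by
    have hJcf : charFun (P.map J) u = Complex.exp (jumpExponent β ν u) := by
      rw [charFun_apply_real, integral_map hJ.aemeasurable (by fun_prop), ← hJlaw u]
      refine integral_congr_ae (ae_of_all _ fun ω => ?_)
      ring_nf
    rw [hindep.charFun_map_fun_add_eq_mul hG.aemeasurable hJ.aemeasurable, Pi.mul_apply, hGlaw,
      charFun_gaussianReal, hJcf, Complex.exp_add]
    congr 2
    push_cast
    ring

section LawOfProcess

variable {Ω : Type*} [MeasurableSpace Ω] {P : Measure Ω} [IsProbabilityMeasure P]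
  {Y Cp Cm σ b h : ℝ} {q : ℝ → ℝ} {J W : Ω → ℝ}

theorem hasLevyTriplet_map_brownian_add_jump (hWm : Measurable W) (hW : P.map W = gaussianReal 0 1)
    (hJm : Measurable J) (hh : 0 ≤ h)
    (hJ : ∀ u : ℝ, ∫ ω, Complex.exp (Complex.I * u * J ω) ∂P
      = Complex.exp (h * psiJ b Y Cp Cm q u)) (hindep : IndepFun W J P)
    (hν : Integrable sqMinAbs (levyMeasure Y Cp Cm q)) {s : ℝ≥0} (hs : (s : ℝ) = σ ^ 2 * h) :
    HasLevyTriplet (P.map fun ω => σ * √h * W ω + J ω)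
      (h * (b + ∫ x in {x | 1 < |x|}, x ∂(levyMeasure Y Cp Cm q))) s
      (ENNReal.ofReal h • levyMeasure Y Cp Cm q) := by
  refine hasLevyTriplet_map_add (hWm.const_mul _) hJm ?_ (hν.smul_measure ENNReal.ofReal_ne_top)
    (fun u => by rw [hJ, psiJ_eq_jumpExponent hν, jumpExponent_smul _ _ hh])
    (hindep.comp (measurable_const_mul (σ * √h)) measurable_id)
  rw [(gaussianReal_const_mul ⟨hWm.aemeasurable, hW⟩ (σ * √h)).map_eq, mul_zero]
  congr 1
  ext
  simp [hs, mul_pow, Real.sq_sqrt hh]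

theorem hasLevyTriplet_map_inv_mul {μ : Measure ℝ} {β ε : ℝ} {s t : ℝ≥0} (hY : 0 < Y)
    (hqm : Measurable q) (hh : 0 ≤ h) (hε : 0 < ε)
    (hμ : HasLevyTriplet μ (h * β) s (ENNReal.ofReal h • levyMeasure Y Cp Cm q))
    (ht : (t : ℝ) = s / ε ^ 2) :
    HasLevyTriplet (μ.map (ε⁻¹ * ·)) (ε⁻¹ * (h * β)) t
      (ENNReal.ofReal (h * ε ^ (-Y)) • levyMeasure Y Cp Cm fun x => q (ε * x)) := by
  have hscale := hμ.map_mul (c := ε⁻¹) (t := t) (by rw [ht]; ring)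
  rwa [Measure.map_smul, map_mul_levyMeasure hY hε hqm, smul_smul,
    ← ENNReal.ofReal_mul hh] at hscale

end LawOfProcess

section Rescaling

variable {Y Cp Cm Q A h ε : ℝ} {q α : ℝ → ℝ} {k n : ℕ}

theorem indicator_pow_eq_cutPow (k : ℕ) (hε : 0 < ε) (x : ℝ) :
    {x : ℝ | |x| ≤ ε}.indicator (fun x => x ^ (2 * k)) x
      = ε ^ (2 * k) * cutPow k (ε⁻¹ * x) := by
  have habs : |ε⁻¹ * x| = |x| / ε := by rw [abs_mul, abs_inv, abs_of_pos hε, inv_mul_eq_div]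
  rcases le_or_gt |x| ε with hx | hx
  · rw [indicator_of_mem (s := {x : ℝ | |x| ≤ ε}) hx,
      cutPow_of_le (habs.trans_le ((div_le_one hε).2 hx)), mul_pow, inv_pow,
      mul_inv_cancel_left₀ (by positivity)]
  · rw [indicator_of_notMem (s := {x : ℝ | |x| ≤ ε}) hx.not_ge,
      cutPow_of_lt (habs.symm ▸ (one_lt_div hε).2 hx), mul_zero]

theorem abs_inv_mul_mul_le (hY : 1 ≤ Y) (hh : 0 ≤ h) (hε : 0 < ε) (hε1 : ε ≤ 1) (β : ℝ) :
    |ε⁻¹ * (h * β)| ≤ |β| * (h * ε ^ (-Y)) := by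
  have hinv : ε⁻¹ ≤ ε ^ (-Y) := by
    rw [← Real.rpow_neg_one]
    exact Real.rpow_le_rpow_of_exponent_ge hε hε1 (by linarith)
  rw [abs_mul, abs_mul, abs_of_nonneg hh, abs_of_pos (inv_pos.2 hε)]
  calc ε⁻¹ * (h * |β|) = |β| * (h * ε⁻¹) := by ring
    _ ≤ |β| * (h * ε ^ (-Y)) := by gcongr

theorem exists_abs_integral_indicator_pow_sub_le (hY1 : 1 < Y) (hY2 : Y < 2) (hCp : 0 ≤ Cp)
    (hCm : 0 ≤ Cm) (hqm : Measurable q) (hq : ∀ x, 0 ≤ q x) (hQ : ∀ x, q x ≤ Q)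
    (hα : ∀ x, |α x| ≤ A)
    (hTaylor : IntegrableOn (fun x => |q x - 1 - α x * x| * |x| ^ (-1 - Y)) (Icc (-1) 1))
    (hk : 1 ≤ k) (hkn : k ≤ n) (β : ℝ) :
    ∃ C : ℝ, 0 ≤ C ∧ ∀ (μ : Measure ℝ) [IsProbabilityMeasure μ] (h ε : ℝ) (s : ℝ≥0),
      HasLevyTriplet μ (h * β) s (ENNReal.ofReal h • levyMeasure Y Cp Cm q) → 0 ≤ h → 0 < ε →
        2 * ε ≤ 1 → h * ε ^ (-Y) ≤ 1 →
        |∫ x, {x : ℝ | |x| ≤ ε}.indicator (fun x => x ^ (2 * k)) x ∂μ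
            - ε ^ (2 * k) * ((Nat.doubleFactorial (2 * k - 1) : ℝ) * (s / ε ^ 2) ^ k
              + h * ε ^ (-Y) * ((Cp + Cm) / (2 * k - Y)))|
          ≤ C * (ε ^ (2 * k) * (h * ε ^ (-Y) * (h * ε ^ (-Y) + s / ε ^ 2)
            + (s / ε ^ 2) ^ n + h * ε ^ (-Y) * ε)) := by
  obtain ⟨C, hC, hcut⟩ := exists_abs_integral_cutPow_sub_le hY1 hY2 hCp hCm
    ((hq 0).trans (hQ 0)) hk hkn (abs_nonneg β)
  obtain ⟨K, hK, hdefect⟩ := exists_tiltDefect_comp_mul_le hY1 hY2 hα hTaylor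
  refine ⟨C * (1 + K), by positivity, fun μ _ h ε s hμ hh hε hε2 hl => ?_⟩
  have hl0 : 0 ≤ h * ε ^ (-Y) := by positivity
  let t : ℝ≥0 := ⟨s / ε ^ 2, by positivity⟩
  have ht : (t : ℝ) = s / ε ^ 2 := rfl
  have hε' : Measurable (ε⁻¹ * · : ℝ → ℝ) := measurable_const_mul _
  have : IsProbabilityMeasure (μ.map (ε⁻¹ * ·)) :=
    Measure.isProbabilityMeasure_map hε'.aemeasurable
  have hunit := hcut (μ.map (ε⁻¹ * ·)) (fun x => q (ε * x)) _ t _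
    (hqm.comp (measurable_const_mul ε)) (fun x => hq _) (fun x => hQ _)
    (hasLevyTriplet_map_inv_mul (by linarith) hqm hh hε hμ ht) hl0 hl
    (abs_inv_mul_mul_le hY1.le hh hε (by linarith) β)
  have hD := hdefect ε hε hε2
  rw [integral_map hε'.aemeasurable (measurable_cutPow k).aestronglyMeasurable, sub_sub,
    ht] at hunit
  simp only [indicator_pow_eq_cutPow k hε]
  rw [integral_const_mul, ← mul_sub, abs_mul, abs_of_nonneg (by positivity), mul_left_comm]
  refine mul_le_mul_of_nonneg_left (hunit.trans ?_) (by positivity)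
  calc _ ≤ C * (h * ε ^ (-Y) * (h * ε ^ (-Y) + s / ε ^ 2) + (s / ε ^ 2) ^ n
          + h * ε ^ (-Y) * (K * ε)) := by gcongr
    _ ≤ C * (1 + K) * (h * ε ^ (-Y) * (h * ε ^ (-Y) + s / ε ^ 2) + (s / ε ^ 2) ^ n
          + h * ε ^ (-Y) * ε) := by
        rw [mul_assoc C]
        have : 0 ≤ K * (h * ε ^ (-Y) * (h * ε ^ (-Y) + s / ε ^ 2) + (s / ε ^ 2) ^ n) := by
          positivity
        gcongr
        linarith [mul_nonneg hl0 hε.le]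

end Rescaling

/-! ### Asymptotics -/

theorem exists_add_eq_of_isBigO_add {α E F : Type*} [NormedAddCommGroup E] [NormedAddCommGroup F]
    {l : Filter α} {f : α → E} {g₁ g₂ : α → F} (hf : f =O[l] fun x => g₁ x + g₂ x) :
    ∃ f₁ f₂ : α → E, (∀ x, f x = f₁ x + f₂ x) ∧ f₁ =O[l] g₁ ∧ f₂ =O[l] g₂ := by
  classical
  obtain ⟨C, hC, hfC⟩ := hf.exists_nonneg
  have hmax {x : α} {g : F} (hx : ‖f x‖ ≤ C * ‖g₁ x + g₂ x‖) (h₁ : ‖g₁ x‖ ≤ ‖g‖)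
      (h₂ : ‖g₂ x‖ ≤ ‖g‖) : ‖f x‖ ≤ 2 * C * ‖g‖ := by
    calc ‖f x‖ ≤ C * (‖g₁ x‖ + ‖g₂ x‖) := hx.trans (by gcongr; exact norm_add_le _ _)
      _ ≤ C * (‖g‖ + ‖g‖) := by gcongr
      _ = 2 * C * ‖g‖ := by ring
  refine ⟨fun x => if ‖g₂ x‖ ≤ ‖g₁ x‖ then f x else 0, fun x => if ‖g₂ x‖ ≤ ‖g₁ x‖ then 0 else f x,
    fun x => by dsimp only; split_ifs <;> simp, IsBigO.of_bound (2 * C) ?_,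
    IsBigO.of_bound (2 * C) ?_⟩ <;>
    filter_upwards [hfC.bound] with x hx
  · split_ifs with hg
    · exact hmax hx le_rfl hg
    · rw [norm_zero]
      positivity
  · split_ifs with hg
    · rw [norm_zero]
      positivity
    · exact hmax hx (le_of_not_ge hg) le_rfl

section Rates

variable {Y σ δ h ε : ℝ}

theorem div_sq_le_rpow (hh : 0 < h) (hε : h ^ (1 / 2 - δ) ≤ ε) : h / ε ^ 2 ≤ h ^ (2 * δ) := by
  have hpow : 0 < h ^ (1 / 2 - δ) := by positivity
  have hεpos : 0 < ε := hpow.trans_le hε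
  rw [div_le_iff₀ (by positivity)]
  calc h = h ^ (2 * δ) * (h ^ (1 / 2 - δ)) ^ 2 := by
        rw [← Real.rpow_mul_natCast hh.le, ← Real.rpow_add hh]
        push_cast
        ring_nf
        exact (Real.rpow_one h).symm
    _ ≤ h ^ (2 * δ) * ε ^ 2 := by gcongr

theorem div_sq_pow_le_sq {n : ℕ} (hn : 1 ≤ δ * n) (hh : 0 < h) (hh1 : h ≤ 1)
    (hε : h ^ (1 / 2 - δ) ≤ ε) : (h / ε ^ 2) ^ n ≤ h ^ 2 :=
  calc (h / ε ^ 2) ^ n ≤ (h ^ (2 * δ)) ^ n := by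
        gcongr
        exact div_sq_le_rpow hh hε
    _ = h ^ (2 * (δ * n)) := by rw [← Real.rpow_mul_natCast hh.le, mul_assoc]
    _ ≤ h ^ (2 : ℝ) := Real.rpow_le_rpow_of_exponent_ge hh hh1 (by linarith)
    _ = h ^ 2 := Real.rpow_two h

theorem mul_rpow_neg_le_div_sq (hY : Y ≤ 2) (hh : 0 ≤ h) (hε : 0 < ε) (hε1 : ε ≤ 1) :
    h * ε ^ (-Y) ≤ h / ε ^ 2 := by
  rw [div_eq_mul_inv, ← Real.rpow_two, ← Real.rpow_neg hε.le]
  gcongr h * ?_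
  exact Real.rpow_le_rpow_of_exponent_ge hε hε1 (by linarith)

theorem pow_mul_rpow_rates_le (hY : 0 ≤ Y) (hY2 : Y ≤ 2) (k : ℕ) {n : ℕ} (hh : 0 < h) (hε : 0 < ε)
    (hε1 : ε ≤ 1) (hn : (h / ε ^ 2) ^ n ≤ h ^ 2) :
    ε ^ (2 * k) * (h * ε ^ (-Y) * (h * ε ^ (-Y) + σ ^ 2 * h / ε ^ 2)
        + (σ ^ 2 * h / ε ^ 2) ^ n + h * ε ^ (-Y) * ε)
      ≤ (2 + σ ^ 2 + (σ ^ 2) ^ n)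
        * (h ^ 2 * ε ^ (2 * (k : ℝ) - Y - 2) + h * ε ^ (2 * (k : ℝ) - Y / 2)) := by
  have hl := mul_rpow_neg_le_div_sq hY2 hh.le hε hε1
  have hjumps : h ^ 2 * ε ^ (2 * (k : ℝ) - Y - 2)
      = ε ^ (2 * k) * (h * ε ^ (-Y) * (h / ε ^ 2)) := by
    rw [show 2 * (k : ℝ) - Y - 2 = (2 * k : ℕ) + -Y - (2 : ℕ) by push_cast; ring,
      Real.rpow_sub hε, Real.rpow_add hε, Real.rpow_natCast, Real.rpow_natCast]
    field_simp
  have htilt : h * ε ^ (2 * (k : ℝ) - Y / 2) = ε ^ (2 * k) * (h * ε ^ (-Y) * ε ^ (Y / 2)) := by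
    rw [show 2 * (k : ℝ) - Y / 2 = (2 * k : ℕ) + -Y + Y / 2 by push_cast; ring,
      Real.rpow_add hε, Real.rpow_add hε, Real.rpow_natCast]
    ring
  have hεY : ε ≤ ε ^ (Y / 2) := Real.self_le_rpow_of_le_one hε.le hε1 (by linarith)
  have hsq : h ^ 2 ≤ h * ε ^ (-Y) * (h / ε ^ 2) :=
    calc h ^ 2 = h * 1 * (h / 1) := by ring
      _ ≤ h * ε ^ (-Y) * (h / ε ^ 2) := by
          gcongr
          · exact Real.one_le_rpow_of_pos_of_le_one_of_nonpos hε hε1 (by linarith)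
          · exact pow_le_one₀ hε.le hε1
  rw [hjumps, htilt, ← mul_add, mul_left_comm]
  gcongr
  calc h * ε ^ (-Y) * (h * ε ^ (-Y) + σ ^ 2 * h / ε ^ 2) + (σ ^ 2 * h / ε ^ 2) ^ n
          + h * ε ^ (-Y) * ε
      = h * ε ^ (-Y) * (h * ε ^ (-Y)) + σ ^ 2 * (h * ε ^ (-Y) * (h / ε ^ 2))
          + (σ ^ 2) ^ n * (h / ε ^ 2) ^ n + h * ε ^ (-Y) * ε := by
        rw [mul_div_assoc, mul_pow]
        ring
    _ ≤ h * ε ^ (-Y) * (h / ε ^ 2) + σ ^ 2 * (h * ε ^ (-Y) * (h / ε ^ 2))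
          + (σ ^ 2) ^ n * (h * ε ^ (-Y) * (h / ε ^ 2)) + h * ε ^ (-Y) * ε ^ (Y / 2) := by
        gcongr
        exact hn.trans hsq
    _ ≤ (2 + σ ^ 2 + (σ ^ 2) ^ n)
          * (h * ε ^ (-Y) * (h / ε ^ 2) + h * ε ^ (-Y) * ε ^ (Y / 2)) := by
        have : 0 ≤ h * ε ^ (-Y) * (h / ε ^ 2) + (1 + σ ^ 2 + (σ ^ 2) ^ n)
          * (h * ε ^ (-Y) * ε ^ (Y / 2)) := by positivity
        linarith

theorem pow_mul_rpow_main_eq (k : ℕ) (hε : 0 < ε) (d c : ℝ) :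
    ε ^ (2 * k) * (d * (σ ^ 2 * h / ε ^ 2) ^ k + h * ε ^ (-Y) * c)
      = d * σ ^ (2 * k) * h ^ k + c * h * ε ^ (2 * (k : ℝ) - Y) := by
  rw [show 2 * (k : ℝ) - Y = (2 * k : ℕ) + -Y by push_cast; ring, Real.rpow_add hε,
    Real.rpow_natCast, div_pow, mul_pow, ← pow_mul, ← pow_mul]
  field_simp

end Rates

section TruncatedMoments

variable {Y δ : ℝ} {ε : ℝ → ℝ}

theorem eventually_rescaled_small {n : ℕ} (hY : Y ≤ 2) (hδ : 0 < δ) (hn : 1 ≤ δ * n)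
    (hε0 : Tendsto ε (𝓝[>] 0) (𝓝 0)) (hεlow : ∀ᶠ h in 𝓝[>] 0, h ^ (1 / 2 - δ) ≤ ε h) :
    ∀ᶠ h in 𝓝[>] 0, 0 < h ∧ 0 < ε h ∧ 2 * ε h ≤ 1 ∧ h * ε h ^ (-Y) ≤ 1 ∧
      (h / ε h ^ 2) ^ n ≤ h ^ 2 := by
  filter_upwards [hεlow, self_mem_nhdsWithin, hε0.eventually_le_const (half_pos one_pos),
    nhdsWithin_le_nhds (eventually_le_nhds one_pos)] with h hlow hh hε2 hh1
  have hh : 0 < h := hh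
  have hε : 0 < ε h := (Real.rpow_pos_of_pos hh _).trans_le hlow
  exact ⟨hh, hε, by linarith,
    calc h * ε h ^ (-Y) ≤ h / ε h ^ 2 := mul_rpow_neg_le_div_sq hY hh.le hε (by linarith)
      _ ≤ h ^ (2 * δ) := div_sq_le_rpow hh hlow
      _ ≤ 1 := Real.rpow_le_one hh.le hh1 (by positivity),
    div_sq_pow_le_sq hn hh hh1 hlow⟩

variable {Ω : Type*} [MeasurableSpace Ω] {P : Measure Ω} [IsProbabilityMeasure P]
  {Cp Cm σ b A Q : ℝ} {q α : ℝ → ℝ} {J : ℝ → Ω → ℝ} {W : Ω → ℝ}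

theorem isBigO_truncated_moment_sub (hY1 : 1 < Y) (hY2 : Y < 2) (hCp : 0 ≤ Cp) (hCm : 0 ≤ Cm)
    (hqm : Measurable q) (hq : ∀ x, 0 ≤ q x) (hQ : ∀ x, q x ≤ Q) (hα : ∀ x, |α x| ≤ A)
    (hTaylor : IntegrableOn (fun x => |q x - 1 - α x * x| * |x| ^ (-1 - Y)) (Icc (-1) 1))
    (hWm : Measurable W) (hW : P.map W = gaussianReal 0 1) (hJm : ∀ h, Measurable (J h))
    (hJ : ∀ h : ℝ, 0 < h → ∀ u : ℝ, ∫ ω, Complex.exp (Complex.I * u * J h ω) ∂P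
      = Complex.exp (h * psiJ b Y Cp Cm q u))
    (hindep : ∀ h : ℝ, 0 < h → IndepFun W (J h) P) {k : ℕ} (hk : 1 ≤ k)
    (hε0 : Tendsto ε (𝓝[>] 0) (𝓝 0)) (hδ : 0 < δ)
    (hεlow : ∀ᶠ h in 𝓝[>] 0, h ^ (1 / 2 - δ) ≤ ε h) :
    (fun h => ∫ ω, {x : ℝ | |x| ≤ ε h}.indicator (fun x => x ^ (2 * k)) (σ * √h * W ω + J h ω) ∂P
        - ((Nat.doubleFactorial (2 * k - 1) : ℝ) * σ ^ (2 * k) * h ^ k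
          + (Cp + Cm) / (2 * k - Y) * h * ε h ^ (2 * (k : ℝ) - Y)))
      =O[𝓝[>] 0] fun h => h ^ 2 * ε h ^ (2 * (k : ℝ) - Y - 2)
        + h * ε h ^ (2 * (k : ℝ) - Y / 2) := by
  obtain ⟨m, hm⟩ := exists_nat_ge δ⁻¹
  have hn : 1 ≤ δ * (max k m : ℕ) :=
    calc 1 = δ * δ⁻¹ := (mul_inv_cancel₀ hδ.ne').symm
      _ ≤ δ * (max k m : ℕ) := by gcongr; exact hm.trans (by simp)
  obtain ⟨C, hC, hbound⟩ := exists_abs_integral_indicator_pow_sub_le hY1 hY2 hCp hCm hqm hq hQ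
    hα hTaylor hk (le_max_left k m) (b + ∫ x in {x | 1 < |x|}, x ∂(levyMeasure Y Cp Cm q))
  refine IsBigO.of_bound (C * (2 + σ ^ 2 + (σ ^ 2) ^ max k m)) ?_
  filter_upwards [eventually_rescaled_small hY2.le hδ hn hε0 hεlow]
    with h ⟨hh, hε, hε2, hl, hsmall⟩
  let s : ℝ≥0 := ⟨σ ^ 2 * h, by positivity⟩
  have hX : Measurable fun ω => σ * √h * W ω + J h ω := (hWm.const_mul _).add (hJm h)
  have := Measure.isProbabilityMeasure_map (μ := P) hX.aemeasurable
  have hmoment := hbound _ h (ε h) s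
    (hasLevyTriplet_map_brownian_add_jump hWm hW (hJm h) hh.le (hJ h hh) (hindep h hh)
      (integrable_sqMinAbs_levyMeasure hY1 hY2 hCp hCm hqm hq hQ) rfl) hh.le hε hε2 hl
  have hs : (s : ℝ) = σ ^ 2 * h := rfl
  have htrunc : Measurable ({x : ℝ | |x| ≤ ε h}.indicator fun x => x ^ (2 * k)) :=
    (measurable_id.pow_const _).indicator (measurableSet_le measurable_abs measurable_const)
  rw [integral_map hX.aemeasurable htrunc.aestronglyMeasurable, hs,
    pow_mul_rpow_main_eq k hε] at hmoment
  rw [Real.norm_eq_abs, Real.norm_of_nonneg (by positivity), mul_assoc C]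
  exact hmoment.trans (mul_le_mul_of_nonneg_left
    (pow_mul_rpow_rates_le (by linarith) hY2.le k hh hε (by linarith) hsmall) hC)

end TruncatedMoments

theorem truncated_even_moments_general {Ω : Type*} [MeasurableSpace Ω] (P : Measure Ω)
    [IsProbabilityMeasure P] (Y Cp Cm σ b : ℝ) (q : ℝ → ℝ) (hY1 : 1 < Y) (hY2 : Y < 2)
    (hCp : 0 ≤ Cp) (hCm : 0 ≤ Cm) (hqm : Measurable q) (hq : ∀ x, 0 ≤ q x)
    (hQ : ∃ Q : ℝ, ∀ x, q x ≤ Q)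
    (hTaylor : ∃ αp αm : ℝ,
      IntegrableOn (fun x => |q x - 1 - αp * x| * x ^ (-Y - 1)) (Ioc 0 1) ∧
      IntegrableOn (fun x => |q x - 1 - αm * x| * |x| ^ (-Y - 1)) (Ico (-1) 0))
    (J : ℝ → Ω → ℝ) (W : Ω → ℝ) (hWm : Measurable W) (hW : P.map W = gaussianReal 0 1)
    (hJm : ∀ h, Measurable (J h))
    (hJ : ∀ h : ℝ, 0 < h → ∀ u : ℝ, ∫ ω, Complex.exp (Complex.I * u * J h ω) ∂P
      = Complex.exp (h * psiJ b Y Cp Cm q u))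
    (hindep : ∀ h : ℝ, 0 < h → IndepFun W (J h) P) (k : ℕ) (hk : 1 ≤ k) (ε : ℝ → ℝ)
    (hε0 : Tendsto ε (𝓝[>] 0) (𝓝 0)) (δ : ℝ) (hδ : 0 < δ)
    (hεlow : ∀ᶠ h in 𝓝[>] 0, h ^ (1 / 2 - δ) ≤ ε h) :
    ∃ R₁ R₂ : ℝ → ℝ,
      (∀ h : ℝ, ∫ ω, {x : ℝ | |x| ≤ ε h}.indicator (fun x => x ^ (2 * k))
            (σ * √h * W ω + J h ω) ∂P
          = (Nat.doubleFactorial (2 * k - 1) : ℝ) * σ ^ (2 * k) * h ^ k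
            + (Cp + Cm) / (2 * k - Y) * h * ε h ^ (2 * (k : ℝ) - Y) + R₁ h + R₂ h) ∧
      R₁ =O[𝓝[>] 0] (fun h => h ^ 2 * ε h ^ (2 * (k : ℝ) - Y - 2)) ∧
      R₂ =O[𝓝[>] 0] fun h => h * ε h ^ (2 * (k : ℝ) - Y / 2) := by
  obtain ⟨Q, hQ⟩ := hQ
  obtain ⟨αp, αm, hp, hm⟩ := hTaylor
  have hα : ∀ x : ℝ, |if 0 < x then αp else αm| ≤ max |αp| |αm| := fun x => by
    split_ifs
    exacts [le_max_left _ _, le_max_right _ _]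
  obtain ⟨R₁, R₂, hR, hR₁, hR₂⟩ := exists_add_eq_of_isBigO_add
    (isBigO_truncated_moment_sub (σ := σ) hY1 hY2 hCp hCm hqm hq hQ hα
      (integrableOn_Icc_of_Ioc_of_Ico hp hm) hWm hW hJm hJ hindep hk hε0 hδ hεlow)
  exact ⟨R₁, R₂, fun h => by linarith [hR h], hR₁, hR₂⟩

/-- Lemma B.3: expansion of the truncated even moments of `X_h`:
`E(X_h^{2k} 1_{|X_h|≤ε}) = (2k−1)!! σ^{2k} h^k + ((C₊+C₋)/(2k−Y)) h ε^{2k−Y} + remainders`. -/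
theorem truncated_even_moments
    {Ω : Type*} [MeasurableSpace Ω] (P : Measure Ω) [IsProbabilityMeasure P]
    (Y Cp Cm σ b : ℝ) (q : ℝ → ℝ)
    (hY1 : 1 < Y) (hY2 : Y < 2)
    (hCp : 0 < Cp) (hCm : 0 < Cm) (hσ : 0 < σ)
    (hq_meas : Measurable q) (hq_nonneg : ∀ x, 0 ≤ q x)
    (hq_bdd : ∃ M : ℝ, ∀ x, q x ≤ M)
    (hq_lim : Tendsto q (𝓝[≠] (0 : ℝ)) (𝓝 1))
    (hq_taylor : ∃ αp αm : ℝ, αp ≠ 0 ∧ αm ≠ 0 ∧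
      IntegrableOn (fun x => |q x - 1 - αp * x| * x ^ (-Y - 1)) (Set.Ioc (0 : ℝ) 1) ∧
      IntegrableOn (fun x => |q x - 1 - αm * x| * |x| ^ (-Y - 1)) (Set.Ico (-1 : ℝ) 0))
    (hq_log : ∃ K M : ℝ, ∀ x : ℝ, M ≤ |x| → |Real.log (q x)| ≤ K * |x|)
    (hq_inf : ∀ ε : ℝ, 0 < ε → ∃ c : ℝ, 0 < c ∧ ∀ x : ℝ, x ≠ 0 → |x| < ε → c ≤ q x)
    (hq_sq : IntegrableOn (fun x => q x ^ 2 * |x| ^ (-1 - Y)) {x : ℝ | 1 < |x|})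
    -- the jump part `J` and the Brownian part `W`
    (J : ℝ → Ω → ℝ) (W : Ω → ℝ)
    (hWmeas : Measurable W) (hW : P.map W = gaussianReal 0 1)
    (hJmeas : ∀ h : ℝ, Measurable (J h))
    (hJcf : ∀ h : ℝ, 0 < h → ∀ u : ℝ,
      ∫ ω, Complex.exp (Complex.I * u * J h ω) ∂P = Complex.exp (h * psiJ b Y Cp Cm q u))
    (hindep : ∀ h : ℝ, 0 < h → IndepFun W (J h) P)
    (k : ℕ) (hk : 1 ≤ k)
    -- the threshold `ε = ε(h)`
    (ε : ℝ → ℝ) (hεpos : ∀ h : ℝ, 0 < h → 0 < ε h)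
    (hε0 : Tendsto ε (𝓝[>] (0 : ℝ)) (𝓝 0))
    (δbar : ℝ) (hδ1 : 0 < δbar) (hδ2 : δbar < 1 / 2)
    (hεlow : ∀ᶠ h in 𝓝[>] (0 : ℝ), h ^ (1 / 2 - δbar) ≤ ε h) :
    ∃ R₁ R₂ R₃ : ℝ → ℝ,
      (∀ h : ℝ, 0 < h →
        (∫ ω, Set.indicator {x : ℝ | |x| ≤ ε h} (fun x => x ^ (2 * k))
            (σ * Real.sqrt h * W ω + J h ω) ∂P)
          = (Nat.doubleFactorial (2 * k - 1) : ℝ) * σ ^ (2 * k) * h ^ k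
            + (Cp + Cm) / (2 * k - Y) * h * ε h ^ (2 * (k : ℝ) - Y)
            + R₁ h + R₂ h + R₃ h) ∧
      R₁ =O[𝓝[>] (0 : ℝ)] (fun h => h ^ 2 * ε h ^ (2 * (k : ℝ) - Y - 2)) ∧
      R₂ =O[𝓝[>] (0 : ℝ)] (fun h => h * ε h ^ (2 * (k : ℝ) - Y / 2)) ∧
      R₃ =O[𝓝[>] (0 : ℝ)]
        (fun h => Real.sqrt h * ε h ^ (2 * k - 1) * Real.exp (-(ε h ^ 2) / (2 * σ ^ 2 * h))) := by
  obtain ⟨αp, αm, -, -, hTaylor⟩ := hq_taylor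
  obtain ⟨R₁, R₂, hR, hR₁, hR₂⟩ := truncated_even_moments_general P Y Cp Cm σ b q hY1 hY2 hCp.le
    hCm.le hq_meas hq_nonneg hq_bdd ⟨αp, αm, hTaylor⟩ J W hWmeas hW hJmeas hJcf hindep k hk ε hε0
    δbar hδ1 hεlow
  exact ⟨R₁, R₂, fun _ => 0, fun h _ => by rw [hR h, add_zero], hR₁, hR₂, isBigO_zero _ _⟩

end
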